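/- arXiv:math/0610278 — 2 statements merged into one kernel-verified Lean document; each statement's English description precedes it below -/
import Mathlib

section
/- Let 0 < q < 1, let m ≥ 0, and let x_1,…,x_{2m+1} be nonzero complex numbers such that for all i ≠ j, x_j/x_i ≠ −q^l for every l ∈ ℤ (so that θ(−x_j/x_i;q) ≠ 0). Then pfaff_{1≤i,j≤2m+1}(1 + 2·(x_j/x_i)·θ'(−x_j/x_i;q)/θ(−x_j/x_i;q)) = ((q;q)_∞/(−q;q)_∞)^{2m} · Π_{1≤i<j≤2m+1} θ(x_j/x_i;q)/θ(−x_j/x_i;q). -/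
/-- The pfaffian-type sum `(1/(2^M · M!)) · Σ_σ sgn(σ) · Π_{i=1}^{M} a_{σ(2i−1),σ(2i)}`
with `M = ⌊m/2⌋`. -/
noncomputable def pfaff (m : ℕ) (A : Matrix (Fin m) (Fin m) ℂ) : ℂ :=
  (1 / ((2 : ℂ) ^ (m / 2) * (Nat.factorial (m / 2) : ℂ))) *
    ∑ σ : Equiv.Perm (Fin m), ((Equiv.Perm.sign σ : ℤ) : ℂ) *
      ∏ i : Fin (m / 2),
        A (σ ⟨2 * (i : ℕ), by have := i.isLt; omega⟩)
          (σ ⟨2 * (i : ℕ) + 1, by have := i.isLt; omega⟩)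
/-- The infinite q-Pochhammer symbol `(a;q)_∞ = Π_{k≥0} (1 − a q^k)`. -/
noncomputable def qPoch (q : ℝ) (a : ℂ) : ℂ := ∏' k : ℕ, (1 - a * (q : ℂ) ^ k)

/-- The theta function `θ(x;q) = (x;q)_∞ (q/x;q)_∞`. -/
noncomputable def theta (q : ℝ) (x : ℂ) : ℂ := qPoch q x * qPoch q ((q : ℂ) / x)

/-!
Put `h(u) = θ(u) / θ(-u)`, `ζ(u) = 1 + 2 u θ'(-u) / θ(-u)` and `C = ((q;q)_∞ / (-q;q)_∞)²`. After
clearing denominators, both sides of the addition formula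
`ζ(b) - ζ(a) + ζ(a / b) = C h(b) h(a) h(a / b)` are, as functions of `a`, quasi-periodic on
`ℂ \ {0}` with the same multiplier, and the left-hand side vanishes at the simple zeros of the
right-hand side. By Liouville's theorem they are proportional, and `a = -1` determines the factor.

For nodes `x i`, set `h i j = h(x j / x i)`. The addition formula says that `h i j * h i k * h j k`
is, up to `C`, the coboundary of `ζ(x j / x i)`. Hence it is a cocycle, and it remains one when a
node `-x l` is added, for which `h` takes the values `(h l i)⁻¹`. The cocycle relation on four nodes
is the three-point case of an identity of Lagrange interpolation type, and induction extends it to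
any odd number of points. Expand the pfaffian along its first pair of indices and evaluate the
minors by induction on the size. In the resulting sum `ζ` may be replaced by its coboundary, that
is, by the triple products of `h`, and the interpolation identities evaluate what remains.

These identities divide by `h i j`, so they require `x j / x i ∉ q ^ ℤ`. Other nodes are limits of
the curves `x i * exp (i * t)` as `t → 0`, which satisfy this condition for small `t ≠ 0`.
-/

open Filter Topology

section QuasiPeriodic

/-- Quasi-periodicity of a function on `ℂ \ {0}` with respect to multiplication by `q`, with
multiplier `μ`. Nothing is required at `0`, where quotients such as `q / z` take junk values. -/
def IsQuasiPeriodic (q : ℂ) (μ f : ℂ → ℂ) : Prop :=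
  ∀ z, z ≠ 0 → f (q * z) = μ z * f z

variable {q : ℂ} {μ f g : ℂ → ℂ}

lemma IsQuasiPeriodic.zpow_mul_eq_zero_iff (hf : IsQuasiPeriodic q μ f) (hq : q ≠ 0)
    (hμ : ∀ z, z ≠ 0 → μ z ≠ 0) {z : ℂ} (hz : z ≠ 0) (k : ℤ) : f (q ^ k * z) = 0 ↔ f z = 0 := by
  have hperiodic : Function.Periodic (fun k : ℤ => f (q ^ k * z) = 0) 1 := fun k => by
    have hk : q ^ k * z ≠ 0 := mul_ne_zero (zpow_ne_zero k hq) hz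
    simp [zpow_add_one₀ hq, mul_comm _ q, mul_assoc, hf _ hk, hμ _ hk]
  simpa using hperiodic.zsmul_eq k

lemma IsQuasiPeriodic.apply_zpow_mul (hf : IsQuasiPeriodic q 1 f) (hq : q ≠ 0) {z : ℂ}
    (hz : z ≠ 0) (k : ℤ) : f (q ^ k * z) = f z := by
  have hperiodic : Function.Periodic (fun k : ℤ => f (q ^ k * z)) 1 := fun k => by
    simpa [zpow_add_one₀ hq, mul_comm _ q, mul_assoc]
      using hf _ (mul_ne_zero (zpow_ne_zero k hq) hz)
  simpa using hperiodic.zsmul_eq k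

lemma exists_norm_zpow_mul_mem_Icc (hq0 : q ≠ 0) (hq1 : ‖q‖ < 1) {z : ℂ} (hz : z ≠ 0) :
    ∃ k : ℤ, ‖q ^ k * z‖ ∈ Set.Icc ‖q‖ 1 := by
  have hq : 0 < ‖q‖ := norm_pos_iff.mpr hq0
  obtain ⟨k, hlower, hupper⟩ :=
    exists_mem_Ioc_zpow (norm_pos_iff.mpr hz) ((one_lt_inv₀ hq).mpr hq1)
  refine ⟨k + 1, ?_, ?_⟩ <;> simp only [norm_mul, norm_zpow]
  · calc ‖q‖ = ‖q‖ ^ (k + 1) * ‖q‖⁻¹ ^ k := by rw [inv_zpow, zpow_add_one₀ hq.ne']; field_simp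
      _ ≤ _ := by gcongr
  · calc _ ≤ ‖q‖ ^ (k + 1) * ‖q‖⁻¹ ^ (k + 1) := by gcongr
      _ = 1 := by rw [← mul_zpow, mul_inv_cancel₀ hq.ne', one_zpow]

/-- The orbits of `q` all meet a compact annulus, so `‖f‖` attains its maximum on `ℂ \ {0}`. -/
lemma IsQuasiPeriodic.apply_eq_apply (hf : IsQuasiPeriodic q 1 f) (hq0 : q ≠ 0) (hq1 : ‖q‖ < 1)
    (hd : DifferentiableOn ℂ f {0}ᶜ) {z w : ℂ} (hz : z ≠ 0) (hw : w ≠ 0) : f z = f w := by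
  let annulus : Set ℂ := norm ⁻¹' Set.Icc ‖q‖ 1
  have hannulus0 : annulus ⊆ {0}ᶜ := fun z hz =>
    norm_pos_iff.mp ((norm_pos_iff.mpr hq0).trans_le hz.1)
  have hcompact : IsCompact annulus :=
    (isCompact_closedBall (0 : ℂ) 1).of_isClosed_subset (isClosed_Icc.preimage continuous_norm)
      fun z hz => by simpa using hz.2
  obtain ⟨c, hc, hmax⟩ := hcompact.exists_isMaxOn ⟨q, le_rfl, hq1.le⟩
    (hd.continuousOn.mono hannulus0).norm
  have hmax' : IsMaxOn (norm ∘ f) {0}ᶜ c := fun z hz => by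
    obtain ⟨k, hk⟩ := exists_norm_zpow_mul_mem_Icc hq0 hq1 hz
    simpa [hf.apply_zpow_mul hq0 hz] using hmax hk
  have hconst := Complex.eqOn_of_isPreconnected_of_isMaxOn_norm
    (isConnected_compl_singleton_of_one_lt_rank (by simp) 0).isPreconnected
    isOpen_compl_singleton hd (hannulus0 hc) hmax'
  exact (hconst hz).trans (hconst hw).symm

lemma eventually_ne_zero_of_deriv_ne_zero {z : ℂ} (hf : DifferentiableAt ℂ f z)
    (hsimple : f z = 0 → deriv f z ≠ 0) : ∀ᶠ w in 𝓝[≠] z, f w ≠ 0 := by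
  by_cases hz : f z = 0
  · exact hf.hasDerivAt.eventually_ne (hsimple hz)
  · exact (hf.continuousAt.eventually_ne hz).filter_mono nhdsWithin_le_nhds

lemma exists_differentiableOn_eq_mul {U : Set ℂ} (hU : IsOpen U) (hf : DifferentiableOn ℂ f U)
    (hg : DifferentiableOn ℂ g U) (hsimple : ∀ z ∈ U, g z = 0 → deriv g z ≠ 0)
    (hzero : ∀ z ∈ U, g z = 0 → f z = 0) :
    ∃ k, DifferentiableOn ℂ k U ∧ ∀ z ∈ U, f z = g z * k z := by
  let k z := if g z = 0 then deriv f z / deriv g z else f z / g z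
  refine ⟨k, fun z hz => DifferentiableAt.differentiableWithinAt ?_, fun z hz => ?_⟩
  · have hUz : U ∈ 𝓝 z := hU.mem_nhds hz
    by_cases hgz : g z = 0
    · have hf' := ((Complex.differentiableOn_dslope hUz).mpr hf).differentiableAt hUz
      have hg' := ((Complex.differentiableOn_dslope hUz).mpr hg).differentiableAt hUz
      refine (hf'.div hg' (by simpa using hsimple z hz hgz)).congr_of_eventuallyEq ?_
      have hne := eventually_nhdsWithin_iff.mp <|
        eventually_ne_zero_of_deriv_ne_zero (hg.differentiableAt hUz) (hsimple z hz)
      filter_upwards [hne] with w hw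
      rcases eq_or_ne w z with rfl | hwz
      · simp [k, hgz]
      · have := sub_ne_zero.mpr hwz
        simp only [k, if_neg (hw hwz), Pi.div_apply, dslope_of_ne _ hwz, slope_def_field,
          hgz, hzero z hz hgz, sub_zero]
        field_simp
    · refine ((hf.differentiableAt hUz).div (hg.differentiableAt hUz) hgz).congr_of_eventuallyEq ?_
      filter_upwards [(hg.differentiableAt hUz).continuousAt.eventually_ne hgz] with w hw
      simp [k, hw]
  · by_cases hgz : g z = 0
    · simp [hgz, hzero z hz hgz]
    · simp [k, hgz, mul_div_cancel₀]

/-- The quotient `f / g` has removable singularities and multiplier `1`, so it is constant. -/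
lemma IsQuasiPeriodic.mul_eq_mul_of_zeros (hf : IsQuasiPeriodic q μ f)
    (hg : IsQuasiPeriodic q μ g) (hq0 : q ≠ 0) (hq1 : ‖q‖ < 1) (hμ : ∀ z, z ≠ 0 → μ z ≠ 0)
    (hdf : DifferentiableOn ℂ f {0}ᶜ) (hdg : DifferentiableOn ℂ g {0}ᶜ)
    (hsimple : ∀ z, z ≠ 0 → g z = 0 → deriv g z ≠ 0) (hzero : ∀ z, z ≠ 0 → g z = 0 → f z = 0)
    {z w : ℂ} (hz : z ≠ 0) (hw : w ≠ 0) : f z * g w = f w * g z := by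
  obtain ⟨k, hdk, hfk⟩ :=
    exists_differentiableOn_eq_mul isOpen_compl_singleton hdf hdg hsimple hzero
  have hdiff {h : ℂ → ℂ} (hd : DifferentiableOn ℂ h {0}ᶜ) {z : ℂ} (hz : z ≠ 0) :
      DifferentiableAt ℂ h z := hd.differentiableAt (isOpen_compl_singleton.mem_nhds hz)
  have hk : IsQuasiPeriodic q 1 k := fun z hz => by
    have hqz : q * z ≠ 0 := mul_ne_zero hq0 hz
    have hcont : ContinuousAt (fun z => k (q * z)) z :=
      ContinuousAt.comp (g := k) (hdiff hdk hqz).continuousAt (by fun_prop)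
    rw [Pi.one_apply, one_mul]
    refine ((hcont.eventuallyEq_nhds_iff_eventuallyEq_nhdsNE
      (hdiff hdk hz).continuousAt).mp ?_).eq_of_nhds
    filter_upwards [eventually_ne_zero_of_deriv_ne_zero (hdiff hdg hz) (hsimple z hz),
      (eventually_ne_nhds hz).filter_mono nhdsWithin_le_nhds] with w hgw hw
    have hperiod := hf w hw
    rw [hfk _ (mul_ne_zero hq0 hw), hfk w hw, hg w hw] at hperiod
    exact mul_left_cancel₀ (mul_ne_zero (hμ w hw) hgw) (by linear_combination hperiod)
  rw [hfk z hz, hfk w hw, hk.apply_eq_apply hq0 hq1 hdk hz hw]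
  ring

end QuasiPeriodic

section Theta

variable {q : ℝ}

lemma norm_ofReal_lt_one (hq : |q| < 1) : ‖(q : ℂ)‖ < 1 := by simpa using hq

lemma summable_norm_mul_pow (hq : |q| < 1) (a : ℂ) :
    Summable fun k : ℕ => ‖-(a * (q : ℂ) ^ k)‖ := by
  simpa using (summable_geometric_of_lt_one (abs_nonneg q) hq).mul_left ‖a‖

lemma qPoch_eq_one_sub_mul (hq : |q| < 1) (a : ℂ) :
    qPoch q a = (1 - a) * qPoch q (a * q) := by
  unfold qPoch
  rw [tprod_eq_zero_mul']
  · simp only [pow_zero, mul_one, pow_succ', mul_assoc]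
  · refine (multipliable_one_add_of_summable (summable_norm_mul_pow hq (a * q))).congr fun k => ?_
    ring

lemma qPoch_ne_zero (hq : |q| < 1) {a : ℂ} (ha : ∀ k : ℕ, a * (q : ℂ) ^ k ≠ 1) :
    qPoch q a ≠ 0 := by
  have hne (k : ℕ) : 1 + -(a * (q : ℂ) ^ k) ≠ 0 := by
    rw [← sub_eq_add_neg]
    exact sub_ne_zero.mpr (ha k).symm
  simpa [qPoch, sub_eq_add_neg] using
    tprod_one_add_ne_zero_of_summable hne (summable_norm_mul_pow hq a)

lemma differentiable_qPoch (hq : |q| < 1) : Differentiable ℂ (qPoch q) := fun a => by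
  let U := Metric.ball (0 : ℂ) (‖a‖ + 1)
  have hprod := Summable.hasProdLocallyUniformlyOn_nat_one_add (K := U)
    (f := fun k a => -(a * (q : ℂ) ^ k)) Metric.isOpen_ball
    ((summable_geometric_of_lt_one (abs_nonneg q) hq).mul_left (‖a‖ + 1))
    (.of_forall fun k z hz => by
      have : ‖z‖ ≤ ‖a‖ + 1 := by simpa using (Metric.mem_ball.mp hz).le
      simp only [norm_neg, norm_mul, norm_pow, Complex.norm_real, Real.norm_eq_abs]
      gcongr)
    (fun k => by fun_prop)
  have hd := hprod.differentiableOn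
    (.of_forall fun _ => by
      simpa [Finset.prod_fn] using DifferentiableOn.finsetProd fun _ _ => by fun_prop)
    Metric.isOpen_ball
  simp only [← sub_eq_add_neg] at hd
  exact hd.differentiableAt (Metric.isOpen_ball.mem_nhds (by simp))

lemma qPoch_self_ne_zero (hq : |q| < 1) : qPoch q q ≠ 0 :=
  qPoch_ne_zero hq fun k hk => by
    have hpow : |q| ^ (k + 1) = 1 := by
      rw [← abs_pow, pow_succ', show q * q ^ k = 1 by exact_mod_cast hk, abs_one]
    exact (pow_lt_one₀ (abs_nonneg q) hq k.succ_ne_zero).ne hpow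

lemma theta_eq_one_sub_mul (hq : |q| < 1) (z : ℂ) :
    theta q z = (1 - z) * (qPoch q (z * q) * qPoch q (q / z)) := by
  rw [theta, qPoch_eq_one_sub_mul hq z, mul_assoc]

lemma theta_one (hq : |q| < 1) : theta q 1 = 0 := by
  rw [theta_eq_one_sub_mul hq, sub_self, zero_mul]

lemma theta_neg_one (hq : |q| < 1) : theta q (-1) = 2 * qPoch q (-q) ^ 2 := by
  rw [theta_eq_one_sub_mul hq, neg_one_mul, div_neg, div_one]
  ring

lemma theta_inv (hq : |q| < 1) {z : ℂ} (hz : z ≠ 0) : theta q z⁻¹ = -theta q z / z := by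
  rw [theta_eq_one_sub_mul hq, theta_eq_one_sub_mul hq, div_inv_eq_mul, mul_comm (q : ℂ) z,
    inv_mul_eq_div]
  field_simp
  ring

lemma isQuasiPeriodic_theta (hq0 : q ≠ 0) (hq1 : |q| < 1) :
    IsQuasiPeriodic q (fun z => -z⁻¹) (theta q) := fun z hz => by
  have hq : (q : ℂ) ≠ 0 := mod_cast hq0
  rw [theta_eq_one_sub_mul hq1 z, theta, mul_comm (q : ℂ) z, div_mul_cancel_right₀ hq,
    qPoch_eq_one_sub_mul hq1 z⁻¹, inv_mul_eq_div]
  field_simp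
  ring

lemma theta_eq_zero_iff (hq0 : q ≠ 0) (hq1 : |q| < 1) {z : ℂ} (hz : z ≠ 0) :
    theta q z = 0 ↔ ∃ l : ℤ, z = (q : ℂ) ^ l := by
  have hq : (q : ℂ) ≠ 0 := mod_cast hq0
  constructor
  · intro h
    contrapose! h
    refine mul_ne_zero (qPoch_ne_zero hq1 fun k hk => h (-k) ?_)
      (qPoch_ne_zero hq1 fun k hk => h (k + 1) ?_)
    · rw [zpow_neg, zpow_natCast]
      exact eq_inv_of_mul_eq_one_left hk
    · rw [zpow_add_one₀ hq, zpow_natCast]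
      field_simp at hk
      rw [← hk, mul_comm]
  · rintro ⟨l, rfl⟩
    rw [← mul_one ((q : ℂ) ^ l), (isQuasiPeriodic_theta hq0 hq1).zpow_mul_eq_zero_iff hq
      (fun z hz => neg_ne_zero.mpr (inv_ne_zero hz)) one_ne_zero]
    exact theta_one hq1

lemma theta_neg_one_ne_zero (hq0 : q ≠ 0) (hq1 : |q| < 1) : theta q (-1) ≠ 0 := by
  rw [Ne, theta_eq_zero_iff hq0 hq1 (by norm_num)]
  rintro ⟨l, hl⟩
  have hreal : (-1 : ℝ) = q ^ l := by exact_mod_cast hl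
  have habs : |q| ^ l = 1 := by rw [← abs_zpow, ← hreal, abs_neg, abs_one]
  obtain rfl : l = 0 := (zpow_eq_one_iff_right₀ (abs_nonneg q) hq1.ne).mp habs
  norm_num at hreal

lemma qPoch_neg_self_ne_zero (hq0 : q ≠ 0) (hq1 : |q| < 1) : qPoch q (-q) ≠ 0 := fun h =>
  theta_neg_one_ne_zero hq0 hq1 (by simp [theta_neg_one hq1, h])

@[fun_prop]
lemma differentiableAt_theta (hq : |q| < 1) {z : ℂ} (hz : z ≠ 0) :
    DifferentiableAt ℂ (theta q) z := by
  have hd := differentiable_qPoch hq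
  unfold theta
  fun_prop (disch := exact hz)

@[fun_prop]
lemma differentiableAt_deriv_theta (hq : |q| < 1) {z : ℂ} (hz : z ≠ 0) :
    DifferentiableAt ℂ (deriv (theta q)) z :=
  DifferentiableOn.differentiableAt
    (.deriv (fun _ hw => (differentiableAt_theta hq hw).differentiableWithinAt)
      isOpen_compl_singleton)
    (isOpen_compl_singleton.mem_nhds hz)

lemma deriv_theta_one (hq : |q| < 1) : deriv (theta q) 1 = -qPoch q q ^ 2 := by
  have hd := differentiable_qPoch hq
  have hcofactor : DifferentiableAt ℂ (fun z : ℂ => qPoch q (z * q) * qPoch q (q / z)) 1 := by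
    fun_prop (disch := norm_num)
  rw [funext (theta_eq_one_sub_mul hq), deriv_fun_mul (by fun_prop) hcofactor]
  simp [sq]

lemma mul_deriv_theta_mul (hq0 : q ≠ 0) (hq1 : |q| < 1) {z : ℂ} (hz : z ≠ 0) :
    q * deriv (theta q) (q * z) = theta q z / z ^ 2 - deriv (theta q) z / z := by
  have hq : (q : ℂ) ≠ 0 := mod_cast hq0
  have hleft := ((differentiableAt_theta hq1 (mul_ne_zero hq hz)).hasDerivAt).comp z
    ((hasDerivAt_id z).const_mul (q : ℂ))
  have hright := (hasDerivAt_inv hz).fun_neg.mul (differentiableAt_theta hq1 hz).hasDerivAt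
  have heq : (theta q ∘ fun w => q * w) =ᶠ[𝓝 z] fun w => -w⁻¹ * theta q w := by
    filter_upwards [eventually_ne_nhds hz] with w hw using isQuasiPeriodic_theta hq0 hq1 w hw
  have hderiv := hleft.unique (hright.congr_of_eventuallyEq heq)
  field_simp at hderiv ⊢
  linear_combination hderiv

lemma deriv_theta_inv (hq : |q| < 1) {z : ℂ} (hz : z ≠ 0) :
    deriv (theta q) z⁻¹ = z * deriv (theta q) z - theta q z := by
  have hleft := ((differentiableAt_theta hq (inv_ne_zero hz)).hasDerivAt).comp z
    (hasDerivAt_inv hz)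
  have hright := (differentiableAt_theta hq hz).hasDerivAt.fun_neg.fun_div (hasDerivAt_id z) hz
  have heq : (theta q ∘ fun w => w⁻¹) =ᶠ[𝓝 z] fun w => -theta q w / w := by
    filter_upwards [eventually_ne_nhds hz] with w hw using theta_inv hq hw
  have hderiv := hleft.unique (hright.congr_of_eventuallyEq heq)
  simp only [id, mul_one] at hderiv
  rw [← neg_inj, ← div_left_inj' (pow_ne_zero 2 hz)]
  linear_combination hderiv

lemma deriv_theta_ne_zero (hq0 : q ≠ 0) (hq1 : |q| < 1) {z : ℂ} (hz : z ≠ 0)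
    (hzero : theta q z = 0) : deriv (theta q) z ≠ 0 := by
  have hq : (q : ℂ) ≠ 0 := mod_cast hq0
  obtain ⟨l, rfl⟩ := (theta_eq_zero_iff hq0 hq1 hz).mp hzero
  have hperiodic : Function.Periodic (fun l : ℤ => deriv (theta q) ((q : ℂ) ^ l) = 0) 1 :=
    fun l => by
      have hstep := mul_deriv_theta_mul hq0 hq1 (zpow_ne_zero l hq)
      rw [(theta_eq_zero_iff hq0 hq1 (zpow_ne_zero l hq)).mpr ⟨l, rfl⟩, zero_div, zero_sub,
        ← zpow_one_add₀ hq, add_comm] at hstep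
      have := congrArg (· = 0) hstep
      simpa [hq, zpow_ne_zero l hq] using this
  have h := hperiodic.zsmul_eq l
  simp only [smul_eq_mul, mul_one, zpow_zero, deriv_theta_one hq1] at h
  simpa [h] using qPoch_self_ne_zero hq1

end Theta

section AdditionFormula

/-- The elliptic analogue of the hyperbolic tangent; at `q = 0` it is
`(1 - u) / (1 + u) = tanh (-log u / 2)`. -/
noncomputable def thetaRatio (q : ℝ) (u : ℂ) : ℂ := theta q u / theta q (-u)

/-- The analogue of the Weierstrass zeta function whose pole is at `-1`: up to the factor `-2` it
is the logarithmic derivative of `θ(-u)` with respect to `log u`, and the constant `1` makes it odd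
under `u ↦ u⁻¹`. -/
noncomputable def thetaZeta (q : ℝ) (u : ℂ) : ℂ :=
  1 + 2 * u * deriv (theta q) (-u) / theta q (-u)

/-- The numerator of `thetaZeta q u` over the denominator `θ(-u)`. -/
noncomputable def thetaZetaNum (q : ℝ) (u : ℂ) : ℂ :=
  theta q (-u) + 2 * u * deriv (theta q) (-u)

/-- The numerator of `thetaZeta q b - thetaZeta q a + thetaZeta q (a / b)` over the denominator
`θ(-b) θ(-a) θ(-a/b)`. -/
noncomputable def thetaZetaThreeTerm (q : ℝ) (b a : ℂ) : ℂ :=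
  thetaZetaNum q b * theta q (-a) * theta q (-(a / b))
    - theta q (-b) * thetaZetaNum q a * theta q (-(a / b))
    + theta q (-b) * theta q (-a) * thetaZetaNum q (a / b)

variable {q : ℝ}

lemma theta_neg_mul (hq0 : q ≠ 0) (hq1 : |q| < 1) {u : ℂ} (hu : u ≠ 0) :
    theta q (-(q * u)) = theta q (-u) / u := by
  rw [← mul_neg, isQuasiPeriodic_theta hq0 hq1 _ (neg_ne_zero.mpr hu)]
  field_simp

lemma theta_neg_inv (hq : |q| < 1) {u : ℂ} (hu : u ≠ 0) :
    theta q (-u⁻¹) = theta q (-u) / u := by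
  rw [← inv_neg, theta_inv hq (neg_ne_zero.mpr hu), neg_div_neg_eq]

lemma thetaZetaNum_mul (hq0 : q ≠ 0) (hq1 : |q| < 1) {u : ℂ} (hu : u ≠ 0) :
    thetaZetaNum q (q * u) = (thetaZetaNum q u + 2 * theta q (-u)) / u := by
  have hderiv := mul_deriv_theta_mul hq0 hq1 (neg_ne_zero.mpr hu)
  rw [mul_neg] at hderiv
  rw [thetaZetaNum, thetaZetaNum, theta_neg_mul hq0 hq1 hu]
  field_simp at hderiv ⊢
  linear_combination 2 * hderiv

lemma thetaZetaNum_inv (hq : |q| < 1) {u : ℂ} (hu : u ≠ 0) :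
    thetaZetaNum q u⁻¹ = -thetaZetaNum q u / u := by
  rw [thetaZetaNum, thetaZetaNum, theta_neg_inv hq hu, ← inv_neg,
    deriv_theta_inv hq (neg_ne_zero.mpr hu)]
  field_simp
  ring

lemma thetaZetaNum_one (hq : |q| < 1) : thetaZetaNum q 1 = 0 := by
  simpa [self_eq_neg] using thetaZetaNum_inv hq one_ne_zero

lemma thetaZetaNum_neg_one (hq : |q| < 1) : thetaZetaNum q (-1) = 2 * qPoch q q ^ 2 := by
  simp [thetaZetaNum, theta_one hq, deriv_theta_one hq]

@[fun_prop]
lemma differentiableAt_thetaZetaNum (hq : |q| < 1) {u : ℂ} (hu : u ≠ 0) :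
    DifferentiableAt ℂ (thetaZetaNum q) u := by
  unfold thetaZetaNum
  fun_prop (disch := simp [*])

lemma thetaZetaThreeTerm_one (hq : |q| < 1) {b : ℂ} (hb : b ≠ 0) :
    thetaZetaThreeTerm q b 1 = 0 := by
  rw [thetaZetaThreeTerm, one_div, thetaZetaNum_one hq, thetaZetaNum_inv hq hb,
    theta_neg_inv hq hb]
  ring

lemma thetaZetaThreeTerm_self (hq : |q| < 1) {b : ℂ} (hb : b ≠ 0) :
    thetaZetaThreeTerm q b b = 0 := by
  rw [thetaZetaThreeTerm, div_self hb, thetaZetaNum_one hq]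
  ring

lemma thetaZetaThreeTerm_neg_one (hq : |q| < 1) {b : ℂ} (hb : b ≠ 0) :
    thetaZetaThreeTerm q b (-1) = 2 * qPoch q q ^ 2 * (theta q b * theta q (-b) / b) := by
  rw [thetaZetaThreeTerm, neg_neg, theta_one hq, thetaZetaNum_neg_one hq, neg_div, neg_neg, one_div,
    theta_inv hq hb]
  ring

lemma isQuasiPeriodic_thetaZetaThreeTerm (hq0 : q ≠ 0) (hq1 : |q| < 1) {b : ℂ} (hb : b ≠ 0) :
    IsQuasiPeriodic q (fun a => b / a ^ 2) (thetaZetaThreeTerm q b) := fun a ha => by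
  have hab : a / b ≠ 0 := div_ne_zero ha hb
  simp only [thetaZetaThreeTerm, mul_div_assoc, theta_neg_mul hq0 hq1 ha,
    theta_neg_mul hq0 hq1 hab, thetaZetaNum_mul hq0 hq1 ha, thetaZetaNum_mul hq0 hq1 hab]
  field_simp
  ring

lemma isQuasiPeriodic_theta_mul_theta_div (hq0 : q ≠ 0) (hq1 : |q| < 1) {b : ℂ} (hb : b ≠ 0) :
    IsQuasiPeriodic q (fun a => b / a ^ 2) (fun a => theta q a * theta q (a / b)) := fun a ha => by
  have h := isQuasiPeriodic_theta hq0 hq1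
  simp only [mul_div_assoc, h a ha, h (a / b) (div_ne_zero ha hb)]
  field_simp

lemma thetaZetaThreeTerm_eq_zero (hq0 : q ≠ 0) (hq1 : |q| < 1) {a b : ℂ} (ha : a ≠ 0) (hb : b ≠ 0)
    (hzero : theta q a * theta q (a / b) = 0) : thetaZetaThreeTerm q b a = 0 := by
  have hvanish {z : ℂ} (hz : z ≠ 0) (l : ℤ) :=
    (isQuasiPeriodic_thetaZetaThreeTerm hq0 hq1 hb).zpow_mul_eq_zero_iff (mod_cast hq0)
      (fun z hz => div_ne_zero hb (pow_ne_zero 2 hz)) hz l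
  rcases mul_eq_zero.mp hzero with h | h
  · obtain ⟨l, rfl⟩ := (theta_eq_zero_iff hq0 hq1 ha).mp h
    simpa [thetaZetaThreeTerm_one hq1 hb] using hvanish one_ne_zero l
  · obtain ⟨l, hl⟩ := (theta_eq_zero_iff hq0 hq1 (div_ne_zero ha hb)).mp h
    rw [div_eq_iff hb] at hl
    simpa [thetaZetaThreeTerm_self hq1 hb, ← hl] using hvanish hb l

lemma deriv_theta_mul_theta_div_ne_zero (hq0 : q ≠ 0) (hq1 : |q| < 1) {a b : ℂ} (ha : a ≠ 0)
    (hb : b ≠ 0) (hθb : theta q b ≠ 0) (hzero : theta q a * theta q (a / b) = 0) :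
    deriv (fun a => theta q a * theta q (a / b)) a ≠ 0 := by
  have hab : a / b ≠ 0 := div_ne_zero ha hb
  have hderiv : deriv (fun a => theta q a * theta q (a / b)) a =
      deriv (theta q) a * theta q (a / b) + theta q a * (deriv (theta q) (a / b) / b) := by
    refine ((differentiableAt_theta hq1 ha).hasDerivAt.fun_mul ?_).deriv
    simpa [Function.comp_def, div_eq_mul_inv] using
      (differentiableAt_theta hq1 hab).hasDerivAt.comp a ((hasDerivAt_id a).div_const b)
  have hnot : ¬(theta q a = 0 ∧ theta q (a / b) = 0) := by
    rw [theta_eq_zero_iff hq0 hq1 ha, theta_eq_zero_iff hq0 hq1 hab]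
    rintro ⟨⟨k, hk⟩, l, hl⟩
    refine hθb ((theta_eq_zero_iff hq0 hq1 hb).mpr ⟨k - l, ?_⟩)
    rw [zpow_sub₀ (mod_cast hq0), ← hk, ← hl, div_div_cancel₀ ha]
  rw [hderiv]
  rcases mul_eq_zero.mp hzero with h | h
  · simpa [h] using ⟨deriv_theta_ne_zero hq0 hq1 ha h, fun h' => hnot ⟨h, h'⟩⟩
  · simpa [h, hb] using ⟨fun h' => hnot ⟨h', h⟩, deriv_theta_ne_zero hq0 hq1 hab h⟩

lemma thetaZetaThreeTerm_eq_of_theta_ne_zero (hq0 : q ≠ 0) (hq1 : |q| < 1) {a b : ℂ} (ha : a ≠ 0)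
    (hb : b ≠ 0) (hθb : theta q b ≠ 0) (hθb' : theta q (-b) ≠ 0) :
    qPoch q (-q) ^ 2 * thetaZetaThreeTerm q b a =
      qPoch q q ^ 2 * (theta q b * theta q a * theta q (a / b)) := by
  have hleft : DifferentiableOn ℂ (thetaZetaThreeTerm q b) {0}ᶜ := fun z hz =>
    DifferentiableAt.differentiableWithinAt <| by
      have hz : z ≠ 0 := hz
      unfold thetaZetaThreeTerm
      fun_prop (disch := simp [*])
  have hright : DifferentiableOn ℂ (fun z => theta q z * theta q (z / b)) {0}ᶜ := fun z hz =>
    DifferentiableAt.differentiableWithinAt <| by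
      have hz : z ≠ 0 := hz
      fun_prop (disch := simp [*])
  have hconst := (isQuasiPeriodic_thetaZetaThreeTerm hq0 hq1 hb).mul_eq_mul_of_zeros
    (isQuasiPeriodic_theta_mul_theta_div hq0 hq1 hb) (mod_cast hq0) (norm_ofReal_lt_one hq1)
    (fun z hz => div_ne_zero hb (pow_ne_zero 2 hz))
    hleft hright
    (fun z hz => deriv_theta_mul_theta_div_ne_zero hq0 hq1 hz hb hθb)
    (fun z hz => thetaZetaThreeTerm_eq_zero hq0 hq1 hz hb)
    ha (w := -1) (by norm_num)
  rw [thetaZetaThreeTerm_neg_one hq1 hb, theta_neg_one hq1, neg_div, one_div,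
    theta_neg_inv hq1 hb] at hconst
  field_simp at hconst
  linear_combination hconst

lemma thetaZetaThreeTerm_eq (hq0 : q ≠ 0) (hq1 : |q| < 1) {a b : ℂ} (ha : a ≠ 0) (hb : b ≠ 0) :
    qPoch q (-q) ^ 2 * thetaZetaThreeTerm q b a =
      qPoch q q ^ 2 * (theta q b * theta q a * theta q (a / b)) := by
  have hleft : DifferentiableAt ℂ (fun b => qPoch q (-q) ^ 2 * thetaZetaThreeTerm q b a) b := by
    unfold thetaZetaThreeTerm
    fun_prop (disch := simp [*])
  have hright : DifferentiableAt ℂ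
      (fun b => qPoch q q ^ 2 * (theta q b * theta q a * theta q (a / b))) b := by
    fun_prop (disch := simp [*])
  refine ((hleft.continuousAt.eventuallyEq_nhds_iff_eventuallyEq_nhdsNE
    hright.continuousAt).mp ?_).eq_of_nhds
  have hb' : -b ≠ 0 := neg_ne_zero.mpr hb
  have hdneg : DifferentiableAt ℂ (fun b => theta q (-b)) b := by
    fun_prop (disch := assumption)
  filter_upwards [(eventually_ne_nhds hb).filter_mono nhdsWithin_le_nhds,
    eventually_ne_zero_of_deriv_ne_zero (differentiableAt_theta hq1 hb)
      (deriv_theta_ne_zero hq0 hq1 hb),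
    eventually_ne_zero_of_deriv_ne_zero hdneg fun h => by
      simpa [deriv_comp_neg] using deriv_theta_ne_zero hq0 hq1 hb' h]
    with b hb hθb hθb'
  exact thetaZetaThreeTerm_eq_of_theta_ne_zero hq0 hq1 ha hb hθb hθb'

lemma thetaZeta_sub_add (hq0 : q ≠ 0) (hq1 : |q| < 1) {a b : ℂ} (ha : a ≠ 0) (hb : b ≠ 0)
    (hθa : theta q (-a) ≠ 0) (hθb : theta q (-b) ≠ 0) (hθab : theta q (-(a / b)) ≠ 0) :
    thetaZeta q b - thetaZeta q a + thetaZeta q (a / b) =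
      (qPoch q q / qPoch q (-q)) ^ 2 *
        (thetaRatio q b * thetaRatio q a * thetaRatio q (a / b)) := by
  have hthree := thetaZetaThreeTerm_eq hq0 hq1 ha hb
  have hP := qPoch_neg_self_ne_zero hq0 hq1
  simp only [thetaZetaThreeTerm, thetaZetaNum] at hthree
  simp only [thetaZeta, thetaRatio]
  field_simp
  field_simp at hthree
  linear_combination hthree

lemma thetaRatio_inv (hq : |q| < 1) {u : ℂ} (hu : u ≠ 0) :
    thetaRatio q u⁻¹ = -thetaRatio q u := by
  rw [thetaRatio, thetaRatio, theta_inv hq hu, theta_neg_inv hq hu, div_div_div_cancel_right₀ hu,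
    neg_div]

lemma thetaRatio_neg (u : ℂ) : thetaRatio q (-u) = (thetaRatio q u)⁻¹ := by
  rw [thetaRatio, thetaRatio, neg_neg, inv_div]

end AdditionFormula

section TanhKernel

variable {ι κ K : Type*} [Field K]

/-- The values `r i` can be read as `h z i` for an additional point `z`: the triple products
`h i j * h i k * h j k` satisfy the cocycle condition at `z` and any `i, j, k ∈ s`. -/
def IsVirtualPoint (h : ι → ι → K) (s : Set ι) (r : ι → K) : Prop :=
  ∀ ⦃i⦄, i ∈ s → ∀ ⦃j⦄, j ∈ s → ∀ ⦃k⦄, k ∈ s →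
    h i j * r i * r j - h i k * r i * r k + h j k * r j * r k = h i j * h i k * h j k

/-- The algebraic properties shared by `h i j = tanh (t j - t i)` and its elliptic analogue.
Shifting a point by half a period replaces `h l` by its inverse, whence the last field. -/
structure IsTanhKernel (h : ι → ι → K) : Prop where
  antisymm (i j : ι) : h j i = -h i j
  eq_zero_iff (i j : ι) : h i j = 0 ↔ i = j
  isVirtualPoint (l : ι) : IsVirtualPoint h Set.univ (h l)
  isVirtualPoint_inv (l : ι) : IsVirtualPoint h {l}ᶜ fun i => (h l i)⁻¹

lemma IsVirtualPoint.mono {h : ι → ι → K} {s t : Set ι} {r : ι → K} (hr : IsVirtualPoint h s r)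
    (hts : t ⊆ s) : IsVirtualPoint h t r :=
  fun _ hi _ hj _ hk => hr (hts hi) (hts hj) (hts hk)

lemma prod_div_eq_sum_of_interpolation [DecidableEq ι] {h : ι → ι → K} {p : ι → K}
    {t : Finset ι} (hp : ∀ i ∈ t, p i ≠ 0)
    (hinterp : ∑ k ∈ t, ∏ i ∈ t.erase k, p i / h k i = 1) (r : ι → K) :
    ∏ i ∈ t, r i / p i = ∑ k ∈ t, r k / p k * ∏ i ∈ t.erase k, r i / h k i := by
  rw [← mul_one (∏ i ∈ t, r i / p i), ← hinterp, Finset.mul_sum]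
  refine Finset.sum_congr rfl fun k hk => ?_
  rw [← Finset.mul_prod_erase t _ hk, mul_assoc, ← Finset.prod_mul_distrib]
  congr 1
  exact Finset.prod_congr rfl fun i hi =>
    div_mul_div_cancel₀ (hp i (Finset.mem_of_mem_erase hi))

/-- The ratio by which the product of `h` over all pairs shrinks, up to sign, when the points `a`
and `b` are removed. -/
noncomputable def pairWeight [Fintype ι] [DecidableEq ι] (h : ι → ι → K) (a b : ι) : K :=
  (h a b)⁻¹ * ∏ i ∈ {a, b}ᶜ, (h a i * h b i)⁻¹

namespace IsTanhKernel

variable {h : ι → ι → K}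

lemma comp_injective (hh : IsTanhKernel h) {e : κ → ι}
    (he : Function.Injective e) : IsTanhKernel fun i j => h (e i) (e j) where
  antisymm i j := hh.antisymm _ _
  eq_zero_iff i j := by rw [hh.eq_zero_iff, he.eq_iff]
  isVirtualPoint l _ _ _ _ _ _ := hh.isVirtualPoint (e l) trivial trivial trivial
  isVirtualPoint_inv l _ hi _ hj _ hk :=
    hh.isVirtualPoint_inv (e l) (he.ne hi) (he.ne hj) (he.ne hk)

lemma apply_self (hh : IsTanhKernel h) (i : ι) : h i i = 0 := (hh.eq_zero_iff i i).mpr rfl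

lemma ne_zero (hh : IsTanhKernel h) {i j : ι} (hij : i ≠ j) : h i j ≠ 0 :=
  fun h0 => hij ((hh.eq_zero_iff i j).mp h0)

lemma three_point_interpolation (hh : IsTanhKernel h) {r : ι → K} {a b k : ι} (hab : a ≠ b)
    (hak : a ≠ k) (hbk : b ≠ k)
    (hr : h a b * r a * r b - h a k * r a * r k + h b k * r b * r k = h a b * h a k * h b k) :
    r b / h a b * (r k / h a k) + r a / h b a * (r k / h b k) + r a / h k a * (r b / h k b) =
      1 := by
  have hnab := hh.ne_zero hab
  have hnak := hh.ne_zero hak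
  have hnbk := hh.ne_zero hbk
  rw [hh.antisymm a b, hh.antisymm a k, hh.antisymm b k]
  field_simp
  linear_combination hr

variable [DecidableEq ι]

/-- The analogue of Lagrange interpolation for the constant function `1`, evaluated at `r`. -/
lemma sum_prod_div_eq_one (hh : IsTanhKernel h) {s : Finset ι} {r : ι → K}
    (hr : IsVirtualPoint h s r) (hs : Odd s.card) :
    ∑ k ∈ s, ∏ i ∈ s.erase k, r i / h k i = 1 := by
  obtain ⟨m, hm⟩ := hs
  induction m generalizing s r with
  | zero =>
    obtain ⟨a, rfl⟩ := Finset.card_eq_one.mp hm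
    simp
  | succ m ih =>
    obtain ⟨a, s', ha, rfl, hs'⟩ := Finset.card_eq_succ.mp hm
    obtain ⟨b, t, hb, rfl, ht⟩ := Finset.card_eq_succ.mp hs'
    obtain ⟨hab, hat⟩ : a ≠ b ∧ a ∉ t := by simpa using ha
    have hexpand {c : ι} (hc : c ∉ t) : ∏ i ∈ t, r i / h c i =
        ∑ k ∈ t, r k / h c k * ∏ i ∈ t.erase k, r i / h k i :=
      prod_div_eq_sum_of_interpolation (fun i hi => hh.ne_zero (ne_of_mem_of_not_mem hi hc).symm)
        (ih ((hh.isVirtualPoint c).mono (Set.subset_univ _)) ht) r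
    have hterm (k : ι) (hk : k ∈ t) : ∏ i ∈ (insert a (insert b t)).erase k, r i / h k i =
        r a / h k a * (r b / h k b * ∏ i ∈ t.erase k, r i / h k i) := by
      rw [Finset.erase_insert_of_ne (ne_of_mem_of_not_mem hk hat).symm,
        Finset.erase_insert_of_ne (ne_of_mem_of_not_mem hk hb).symm,
        Finset.prod_insert (by simp [hab, hat]), Finset.prod_insert (by simp [hb])]
    rw [Finset.sum_insert ha, Finset.sum_insert hb, Finset.erase_insert ha,
      Finset.erase_insert_of_ne hab, Finset.erase_insert hb, Finset.prod_insert hb,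
      Finset.prod_insert hat, hexpand hat, hexpand hb, Finset.sum_congr rfl hterm,
      Finset.mul_sum, Finset.mul_sum, ← Finset.sum_add_distrib, ← Finset.sum_add_distrib,
      ← ih (hr.mono fun i hi => by simp [Finset.mem_coe.mp hi]) ht]
    refine Finset.sum_congr rfl fun k hk => ?_
    have hcoeff := hh.three_point_interpolation hab (ne_of_mem_of_not_mem hk hat).symm
      (ne_of_mem_of_not_mem hk hb).symm (hr (by simp) (by simp) (by simp [hk]))
    linear_combination (∏ i ∈ t.erase k, r i / h k i) * hcoeff

lemma sum_prod_inv_eq_zero (hh : IsTanhKernel h) {s : Finset ι} (hs : Even s.card) :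
    ∑ k ∈ s, ∏ i ∈ s.erase k, (h k i)⁻¹ = 0 := by
  rcases s.eq_empty_or_nonempty with rfl | ⟨a, ha⟩
  · exact Finset.sum_empty
  obtain ⟨t, hat, rfl⟩ : ∃ t, a ∉ t ∧ s = insert a t :=
    ⟨s.erase a, s.notMem_erase a, (Finset.insert_erase ha).symm⟩
  have hexpand := prod_div_eq_sum_of_interpolation (r := 1)
    (fun i hi => hh.ne_zero (ne_of_mem_of_not_mem hi hat).symm)
    (hh.sum_prod_div_eq_one ((hh.isVirtualPoint a).mono (Set.subset_univ _))
      (by rwa [Finset.card_insert_of_notMem hat, Nat.even_add_one, Nat.not_even_iff_odd] at hs))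
  simp only [Pi.one_apply, one_div] at hexpand
  rw [Finset.sum_insert hat, Finset.erase_insert hat, hexpand, ← Finset.sum_add_distrib]
  refine Finset.sum_eq_zero fun k hk => ?_
  rw [Finset.erase_insert_of_ne (ne_of_mem_of_not_mem hk hat).symm,
    Finset.prod_insert (by simp [hat]), hh.antisymm a k, inv_neg]
  ring

variable [Fintype ι]

lemma pairWeight_self (hh : IsTanhKernel h) (a : ι) : pairWeight h a a = 0 := by
  simp [pairWeight, hh.apply_self]

lemma pairWeight_swap (hh : IsTanhKernel h) (a b : ι) : pairWeight h b a = -pairWeight h a b := by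
  simp [pairWeight, hh.antisymm a b, Finset.pair_comm b a, mul_comm (h b _)⁻¹]

lemma sum_pairWeight (hh : IsTanhKernel h) (hι : Odd (Fintype.card ι)) (a : ι) :
    ∑ b, pairWeight h a b = 0 := by
  have heven : Even ({a}ᶜ : Finset ι).card := by
    rw [← Finset.card_add_card_compl {a}, Finset.card_singleton] at hι
    simpa [Nat.odd_add] using hι
  rw [← Finset.sum_compl_add_sum {a}, Finset.sum_singleton, hh.pairWeight_self, add_zero,
    ← mul_zero (∏ i ∈ {a}ᶜ, (h a i)⁻¹), ← hh.sum_prod_inv_eq_zero heven, Finset.mul_sum]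
  refine Finset.sum_congr rfl fun b hb => ?_
  have herase : ({a}ᶜ : Finset ι).erase b = {a, b}ᶜ := by ext i; simp [and_comm]
  rw [← Finset.mul_prod_erase _ _ hb, herase, pairWeight]
  simp only [mul_inv, Finset.prod_mul_distrib, mul_assoc]

lemma sum_mul_pairWeight_eq_one (hh : IsTanhKernel h) (hι : Odd (Fintype.card ι)) {a c : ι}
    (hac : a ≠ c) : ∑ b, h a b * h a c * h b c * pairWeight h a b = 1 := by
  have hodd : Odd ({a, c}ᶜ : Finset ι).card := by
    rw [← Finset.card_add_card_compl {a, c}, Finset.card_pair hac] at hι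
    simpa [Nat.odd_add'] using hι
  rw [← Finset.sum_compl_add_sum {a, c}, Finset.sum_pair hac, hh.apply_self, hh.apply_self,
    ← hh.sum_prod_div_eq_one ((hh.isVirtualPoint_inv a).mono (by simp [Set.subset_def])) hodd]
  simp only [zero_mul, mul_zero, add_zero]
  refine Finset.sum_congr rfl fun b hb => ?_
  obtain ⟨hba, hbc⟩ : b ≠ a ∧ b ≠ c := by simpa using hb
  have hsplit : ({a, b}ᶜ : Finset ι) = insert c (({a, c}ᶜ : Finset ι).erase b) := by
    ext i
    by_cases hi : i = c <;> simp [hi, hac.symm, hbc.symm, and_comm]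
  have hnab := hh.ne_zero hba.symm
  have hnac := hh.ne_zero hac
  have hnbc := hh.ne_zero hbc
  rw [pairWeight, hsplit, Finset.prod_insert (by simp)]
  simp only [mul_inv, div_eq_mul_inv]
  field_simp

lemma sum_sum_mul_pairWeight (hh : IsTanhKernel h) (hι : Odd (Fintype.card ι)) {f : ι → ι → K}
    {C : K} (hf : ∀ i j k, f i j - f i k + f j k = C * (h i j * h i k * h j k)) :
    ∑ a, ∑ b, f a b * pairWeight h a b = (Fintype.card ι - 1) * C := by
  obtain ⟨c⟩ := Fintype.card_pos_iff.mp hι.pos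
  have hrow : ∑ a, ∑ b, f a c * pairWeight h a b = 0 := by
    simp [← Finset.mul_sum, hh.sum_pairWeight hι]
  have hcol : ∑ a, ∑ b, f b c * pairWeight h a b = 0 := by
    rw [Finset.sum_comm]
    refine Finset.sum_eq_zero fun b _ => ?_
    simp_rw [hh.pairWeight_swap b, ← Finset.mul_sum, Finset.sum_neg_distrib,
      hh.sum_pairWeight hι, neg_zero, mul_zero]
  have hdiag : ∑ b, h c b * h c c * h b c * pairWeight h c b = 0 := by simp [hh.apply_self]
  calc ∑ a, ∑ b, f a b * pairWeight h a b
      = ∑ a, ∑ b, f a b * pairWeight h a b - ∑ a, ∑ b, f a c * pairWeight h a b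
          + ∑ a, ∑ b, f b c * pairWeight h a b := by rw [hrow, hcol, sub_zero, add_zero]
    _ = C * ∑ a, ∑ b, h a b * h a c * h b c * pairWeight h a b := by
      simp only [← Finset.sum_sub_distrib, ← Finset.sum_add_distrib, Finset.mul_sum]
      refine Finset.sum_congr rfl fun a _ => Finset.sum_congr rfl fun b _ => ?_
      linear_combination pairWeight h a b * hf a b c
    _ = C * ∑ a ∈ {c}ᶜ, 1 := by
      rw [← Finset.sum_compl_add_sum {c}, Finset.sum_singleton, hdiag, add_zero]
      exact congrArg _ (Finset.sum_congr rfl fun a ha =>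
        hh.sum_mul_pairWeight_eq_one hι (by simpa using ha))
    _ = (Fintype.card ι - 1) * C := by
      rw [Finset.sum_const, Finset.card_compl, Finset.card_singleton, nsmul_one,
        Nat.cast_pred hι.pos, mul_comm]

end IsTanhKernel

end TanhKernel

section Pfaffian

open Equiv.Perm (sign)

/-- The monomial of `pfaff n A` at the identity permutation; for odd `n` the last index stays
unpaired. -/
noncomputable def pairProd (n : ℕ) (A : Matrix (Fin n) (Fin n) ℂ) : ℂ :=
  ∏ i : Fin (n / 2), A ⟨2 * i, by have := i.isLt; omega⟩ ⟨2 * i + 1, by have := i.isLt; omega⟩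

variable {n : ℕ}

lemma pairProd_add_two (A : Matrix (Fin (n + 2)) (Fin (n + 2)) ℂ) :
    pairProd (n + 2) A = A 0 1 * pairProd n (A.submatrix (·.succ.succ) (·.succ.succ)) := by
  have hn : n / 2 + 1 = (n + 2) / 2 := by omega
  rw [pairProd, ← Fin.prod_congr' _ hn, Fin.prod_univ_succ]
  rfl

lemma pfaff_eq_sum_pairProd (A : Matrix (Fin n) (Fin n) ℂ) :
    pfaff n A = (1 / (2 ^ (n / 2) * (n / 2).factorial)) *
      ∑ σ : Equiv.Perm (Fin n), (sign σ : ℂ) * pairProd n (A.submatrix σ σ) := rfl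

lemma exists_perm_succ_succ (τ : Equiv.Perm (Fin n)) : ∃ σ : Equiv.Perm (Fin (n + 2)),
    sign σ = sign τ ∧ σ 0 = 0 ∧ σ 1 = 1 ∧ ∀ i : Fin n, σ i.succ.succ = (τ i).succ.succ :=
  ⟨Equiv.Perm.decomposeFin.symm (0, Equiv.Perm.decomposeFin.symm (0, τ)), by simp⟩

lemma sum_sign_mul_pairProd_add_two (A : Matrix (Fin (n + 2)) (Fin (n + 2)) ℂ)
    (τ : Equiv.Perm (Fin n)) :
    ∑ σ : Equiv.Perm (Fin (n + 2)), (sign σ : ℂ) * pairProd (n + 2) (A.submatrix σ σ) =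
      ∑ σ : Equiv.Perm (Fin (n + 2)), (sign σ : ℂ) * (A (σ 0) (σ 1) * (sign τ *
        pairProd n ((A.submatrix (σ ·.succ.succ) (σ ·.succ.succ)).submatrix τ τ))) := by
  obtain ⟨τ', hsign, h0, h1, hsucc⟩ := exists_perm_succ_succ τ
  rw [← Equiv.sum_comp (Equiv.mulRight τ')]
  refine Finset.sum_congr rfl fun σ _ => ?_
  rw [pairProd_add_two, Equiv.coe_mulRight, map_mul, hsign]
  simp only [Matrix.submatrix_apply, Matrix.submatrix_submatrix, Equiv.Perm.mul_apply, h0, h1,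
    Function.comp_def, hsucc]
  push_cast
  ring

/-- Averaging `sum_sign_mul_pairProd_add_two` over `τ` replaces the expansion along the first row,
which is not available because `A` need not be skew-symmetric. -/
lemma pfaff_add_two (A : Matrix (Fin (n + 2)) (Fin (n + 2)) ℂ) :
    n.factorial * (2 * (n / 2 + 1 : ℕ)) * pfaff (n + 2) A =
      ∑ σ : Equiv.Perm (Fin (n + 2)), (sign σ : ℂ) *
        (A (σ 0) (σ 1) * pfaff n (A.submatrix (σ ·.succ.succ) (σ ·.succ.succ))) := by
  have hn : (n + 2) / 2 = n / 2 + 1 := by omega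
  have haverage : n.factorial * ∑ σ : Equiv.Perm (Fin (n + 2)),
      (sign σ : ℂ) * pairProd (n + 2) (A.submatrix σ σ) =
        ∑ σ : Equiv.Perm (Fin (n + 2)), (sign σ : ℂ) * (A (σ 0) (σ 1) *
          ∑ τ : Equiv.Perm (Fin n), (sign τ : ℂ) *
            pairProd n ((A.submatrix (σ ·.succ.succ) (σ ·.succ.succ)).submatrix τ τ)) := by
    simp only [Finset.mul_sum (Finset.univ : Finset (Equiv.Perm (Fin n)))]
    rw [Finset.sum_comm, ← Finset.sum_congr rfl fun τ _ => sum_sign_mul_pairProd_add_two A τ]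
    simp [Fintype.card_perm]
  have hfactorial : ((n / 2).factorial : ℂ) ≠ 0 := mod_cast Nat.factorial_ne_zero _
  simp only [pfaff_eq_sum_pairProd, hn, mul_left_comm _ (1 / _ : ℂ), ← Finset.mul_sum, ← haverage]
  rw [Nat.factorial_succ, pow_succ]
  push_cast
  field_simp

lemma sum_perm_apply_zero (φ : Fin (n + 1) → ℂ) :
    ∑ σ : Equiv.Perm (Fin (n + 1)), φ (σ 0) = n.factorial * ∑ a, φ a := by
  rw [← Equiv.sum_comp Equiv.Perm.decomposeFin.symm, Fintype.sum_prod_type]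
  simp [Fintype.card_perm, Finset.mul_sum]

lemma sum_perm_apply_zero_one {φ : Fin (n + 2) → Fin (n + 2) → ℂ} (hφ : ∀ a, φ a a = 0) :
    ∑ σ : Equiv.Perm (Fin (n + 2)), φ (σ 0) (σ 1) = n.factorial * ∑ a, ∑ b, φ a b := by
  rw [← Equiv.sum_comp Equiv.Perm.decomposeFin.symm, Fintype.sum_prod_type, Finset.mul_sum]
  refine Finset.sum_congr rfl fun a _ => ?_
  simp only [Equiv.Perm.decomposeFin_symm_apply_zero, Equiv.Perm.decomposeFin_symm_apply_one]
  rw [sum_perm_apply_zero fun b => φ a (Equiv.swap 0 a b.succ),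
    ← Equiv.sum_comp (Equiv.swap 0 a) (φ a), Fin.sum_univ_succ fun i => φ a (Equiv.swap 0 a i)]
  simp [hφ]

lemma prod_Ioi_add_two (h : Fin (n + 2) → Fin (n + 2) → ℂ) :
    ∏ i, ∏ j ∈ Finset.Ioi i, h i j = h 0 1 * (∏ i : Fin n, h 0 i.succ.succ * h 1 i.succ.succ) *
      ∏ i : Fin n, ∏ j ∈ Finset.Ioi i, h i.succ.succ j.succ.succ := by
  rw [Fin.prod_univ_succ, Fin.prod_univ_succ]
  simp only [Fin.prod_Ioi_zero, Fin.prod_Ioi_succ, Fin.prod_univ_succ (n := n),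
    Finset.prod_mul_distrib]
  simp only [Fin.succ_zero_eq_one]
  ring

lemma pairWeight_zero_one (h : Fin (n + 2) → Fin (n + 2) → ℂ) :
    pairWeight h 0 1 = (h 0 1 * ∏ i : Fin n, h 0 i.succ.succ * h 1 i.succ.succ)⁻¹ := by
  have hcompl : ({0, 1}ᶜ : Finset (Fin (n + 2))) =
      Finset.univ.map ((Fin.succEmb n).trans (Fin.succEmb (n + 1))) := by
    ext i
    cases i using Fin.cases with
    | zero => simp
    | succ i => cases i using Fin.cases <;> simp [Fin.succ_succ_ne_one]
  rw [pairWeight, hcompl, Finset.prod_map, mul_inv, Finset.prod_inv_distrib]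
  rfl

lemma pairWeight_comp_perm {ι K : Type*} [Fintype ι] [DecidableEq ι] [Field K] (h : ι → ι → K)
    (σ : Equiv.Perm ι) (a b : ι) :
    pairWeight (fun i j => h (σ i) (σ j)) a b = pairWeight h (σ a) (σ b) := by
  unfold pairWeight
  congr 1
  exact Finset.prod_equiv σ (by simp) fun _ _ => rfl

namespace IsTanhKernel

lemma sign_mul_prod_Ioi {h : Fin (n + 2) → Fin (n + 2) → ℂ} (hh : IsTanhKernel h)
    (σ : Equiv.Perm (Fin (n + 2))) :
    sign σ * ∏ i : Fin n, ∏ j ∈ Finset.Ioi i, h (σ i.succ.succ) (σ j.succ.succ) =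
      pairWeight h (σ 0) (σ 1) * ∏ i, ∏ j ∈ Finset.Ioi i, h i j := by
  have hne : h (σ 0) (σ 1) *
      ∏ i : Fin n, h (σ 0) (σ i.succ.succ) * h (σ 1) (σ i.succ.succ) ≠ 0 :=
    mul_ne_zero (hh.ne_zero (σ.injective.ne (by simp))) <| Finset.prod_ne_zero_iff.mpr fun i _ =>
      mul_ne_zero (hh.ne_zero (σ.injective.ne (Fin.succ_ne_zero _).symm))
        (hh.ne_zero (σ.injective.ne (Fin.succ_succ_ne_one _).symm))
  have hperm : ∏ i, ∏ j ∈ Finset.Ioi i, h (σ i) (σ j) =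
      sign σ * ∏ i, ∏ j ∈ Finset.Ioi i, h i j :=
    σ.prod_Ioi_comp_eq_sign_mul_prod fun i j => hh.antisymm j i
  have hsign : (sign σ : ℂ) * sign σ = 1 := by
    rcases Int.units_eq_one_or (sign σ) with hσ | hσ <;> simp [hσ]
  rw [prod_Ioi_add_two fun i j => h (σ i) (σ j)] at hperm
  rw [← pairWeight_comp_perm, pairWeight_zero_one, inv_mul_eq_div, eq_div_iff hne]
  linear_combination (sign σ : ℂ) * hperm + (∏ i, ∏ j ∈ Finset.Ioi i, h i j) * hsign

lemma pfaff_add_two_of_minors (hn : Odd n) {f h : Fin (n + 2) → Fin (n + 2) → ℂ}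
    (hh : IsTanhKernel h) {c C : ℂ}
    (hf : ∀ i j k, f i j - f i k + f j k = C * (h i j * h i k * h j k))
    (hminor : ∀ σ : Equiv.Perm (Fin (n + 2)),
      pfaff n (Matrix.of fun i j => f (σ i.succ.succ) (σ j.succ.succ)) =
        c * ∏ i : Fin n, ∏ j ∈ Finset.Ioi i, h (σ i.succ.succ) (σ j.succ.succ)) :
    pfaff (n + 2) (Matrix.of f) = c * C * ∏ i, ∏ j ∈ Finset.Ioi i, h i j := by
  have hterm (σ : Equiv.Perm (Fin (n + 2))) : (sign σ : ℂ) * (f (σ 0) (σ 1) *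
      pfaff n (Matrix.of fun i j => f (σ i.succ.succ) (σ j.succ.succ))) =
        c * (∏ i, ∏ j ∈ Finset.Ioi i, h i j) * (f (σ 0) (σ 1) * pairWeight h (σ 0) (σ 1)) := by
    rw [hminor]
    linear_combination c * f (σ 0) (σ 1) * hh.sign_mul_prod_Ioi σ
  have hrec : n.factorial * (2 * (n / 2 + 1 : ℕ)) * pfaff (n + 2) (Matrix.of f) =
      c * (∏ i, ∏ j ∈ Finset.Ioi i, h i j) * (n.factorial * (((n + 2 : ℕ) - 1) * C)) := by
    have hodd : Odd (Fintype.card (Fin (n + 2))) := by simpa [parity_simps] using hn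
    have hsum := hh.sum_sum_mul_pairWeight hodd hf
    rw [Fintype.card_fin] at hsum
    rw [← hsum, ← sum_perm_apply_zero_one fun a => by rw [hh.pairWeight_self, mul_zero],
      Finset.mul_sum, ← Finset.sum_congr rfl fun σ _ => hterm σ]
    exact pfaff_add_two (Matrix.of f)
  have hfactorial : (n.factorial : ℂ) ≠ 0 := mod_cast n.factorial_ne_zero
  have hhalf : (2 * (n / 2 + 1 : ℕ) : ℂ) = n + 1 :=
    mod_cast congrArg (· + 1) (Nat.two_mul_div_two_add_one_of_odd hn)
  refine mul_left_cancel₀ (mul_ne_zero hfactorial (Nat.cast_add_one_ne_zero n)) ?_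
  rw [← hhalf, hrec, hhalf]
  push_cast
  ring

theorem pfaff_eq {C : ℂ} {m : ℕ} {f h : Fin (2 * m + 1) → Fin (2 * m + 1) → ℂ}
    (hh : IsTanhKernel h) (hf : ∀ i j k, f i j - f i k + f j k = C * (h i j * h i k * h j k)) :
    pfaff (2 * m + 1) (Matrix.of f) = C ^ m * ∏ i, ∏ j ∈ Finset.Ioi i, h i j := by
  induction m with
  | zero => simp [pfaff]
  | succ m ih =>
    rw [pow_succ]
    refine pfaff_add_two_of_minors (n := 2 * m + 1) (odd_two_mul_add_one m) hh hf fun σ => ?_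
    have hinj : Function.Injective fun i : Fin (2 * m + 1) => σ i.succ.succ :=
      σ.injective.comp ((Fin.succ_injective _).comp (Fin.succ_injective _))
    exact ih (hh.comp_injective hinj) fun i j k => hf _ _ _

end IsTanhKernel

end Pfaffian

section EllipticPfaffian

variable {q : ℝ}

lemma thetaZeta_div_sub_add (hq0 : q ≠ 0) (hq1 : |q| < 1) {u v w : ℂ} (hu : u ≠ 0) (hv : v ≠ 0)
    (hw : w ≠ 0) (huv : theta q (-(v / u)) ≠ 0) (huw : theta q (-(w / u)) ≠ 0)
    (hvw : theta q (-(w / v)) ≠ 0) :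
    thetaZeta q (v / u) - thetaZeta q (w / u) + thetaZeta q (w / v) =
      (qPoch q q / qPoch q (-q)) ^ 2 *
        (thetaRatio q (v / u) * thetaRatio q (w / u) * thetaRatio q (w / v)) := by
  rw [← div_div_div_cancel_right₀ hu w v] at hvw ⊢
  exact thetaZeta_sub_add hq0 hq1 (div_ne_zero hw hu) (div_ne_zero hv hu) huw huv hvw

lemma isVirtualPoint_thetaRatio (hq0 : q ≠ 0) (hq1 : |q| < 1) {ι : Type*} {x : ι → ℂ} {z : ℂ}
    {s : Set ι} (hx : ∀ i, x i ≠ 0) (hz : z ≠ 0) (hθx : ∀ i j, theta q (-(x j / x i)) ≠ 0)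
    (hθz : ∀ i ∈ s, theta q (-(x i / z)) ≠ 0) :
    IsVirtualPoint (fun i j => thetaRatio q (x j / x i)) s fun i => thetaRatio q (x i / z) := by
  intro i hi j hj k hk
  have hC : (qPoch q q / qPoch q (-q)) ^ 2 ≠ 0 :=
    pow_ne_zero 2 (div_ne_zero (qPoch_self_ne_zero hq1) (qPoch_neg_self_ne_zero hq0 hq1))
  have hzij := thetaZeta_div_sub_add hq0 hq1 hz (hx i) (hx j) (hθz i hi) (hθz j hj) (hθx i j)
  have hzik := thetaZeta_div_sub_add hq0 hq1 hz (hx i) (hx k) (hθz i hi) (hθz k hk) (hθx i k)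
  have hzjk := thetaZeta_div_sub_add hq0 hq1 hz (hx j) (hx k) (hθz j hj) (hθz k hk) (hθx j k)
  have hijk := thetaZeta_div_sub_add hq0 hq1 (hx i) (hx j) (hx k) (hθx i j) (hθx i k) (hθx j k)
  refine mul_left_cancel₀ hC ?_
  linear_combination hijk - hzij + hzik - hzjk

lemma isTanhKernel_thetaRatio (hq0 : q ≠ 0) (hq1 : |q| < 1) {ι : Type*} {x : ι → ℂ}
    (hx : ∀ i, x i ≠ 0) (hθx : ∀ i j, theta q (-(x j / x i)) ≠ 0)
    (hgeneric : ∀ i j, i ≠ j → theta q (x j / x i) ≠ 0) :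
    IsTanhKernel fun i j => thetaRatio q (x j / x i) where
  antisymm i j := by rw [← thetaRatio_inv hq1 (div_ne_zero (hx j) (hx i)), inv_div]
  eq_zero_iff i j := by
    refine ⟨fun hzero => by_contra fun hij => ?_, fun hij => ?_⟩
    · exact div_ne_zero (hgeneric i j hij) (hθx i j) hzero
    · rw [hij, div_self (hx j), thetaRatio, theta_one hq1, zero_div]
  isVirtualPoint l := isVirtualPoint_thetaRatio hq0 hq1 hx (hx l) hθx fun i _ => hθx l i
  isVirtualPoint_inv l := by
    simp_rw [← thetaRatio_neg, ← div_neg]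
    refine isVirtualPoint_thetaRatio hq0 hq1 hx (neg_ne_zero.mpr (hx l)) hθx fun i hi => ?_
    rw [div_neg, neg_neg]
    exact hgeneric l i (Ne.symm hi)

lemma pfaff_thetaZeta_of_generic (hq0 : q ≠ 0) (hq1 : |q| < 1) {m : ℕ} {x : Fin (2 * m + 1) → ℂ}
    (hx : ∀ i, x i ≠ 0) (hθx : ∀ i j, theta q (-(x j / x i)) ≠ 0)
    (hgeneric : ∀ i j, i ≠ j → theta q (x j / x i) ≠ 0) :
    pfaff (2 * m + 1) (Matrix.of fun i j => thetaZeta q (x j / x i)) =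
      (qPoch q q / qPoch q (-q)) ^ (2 * m) *
        ∏ i, ∏ j ∈ Finset.Ioi i, thetaRatio q (x j / x i) := by
  rw [pow_mul]
  exact (isTanhKernel_thetaRatio hq0 hq1 hx hθx hgeneric).pfaff_eq fun i j k =>
    thetaZeta_div_sub_add hq0 hq1 (hx i) (hx j) (hx k) (hθx i j) (hθx i k) (hθx j k)

lemma eventually_theta_mul_exp_ne_zero (hq0 : q ≠ 0) (hq1 : |q| < 1) {c d : ℂ} (hc : c ≠ 0)
    (hd : d ≠ 0) : ∀ᶠ t in 𝓝[≠] 0, theta q (c * Complex.exp (d * t)) ≠ 0 := by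
  have hderiv : HasDerivAt (fun t => c * Complex.exp (d * t)) (c * d) 0 := by
    simpa using (((hasDerivAt_id (0 : ℂ)).const_mul d).cexp).const_mul c
  have htendsto := hderiv.tendsto_nhdsNE (mul_ne_zero hc hd)
  rw [mul_zero, Complex.exp_zero, mul_one] at htendsto
  exact htendsto.eventually <| eventually_ne_zero_of_deriv_ne_zero
    (differentiableAt_theta hq1 hc) (deriv_theta_ne_zero hq0 hq1 hc)

lemma frequently_theta_div_ne_zero (hq0 : q ≠ 0) (hq1 : |q| < 1) {n : ℕ} {x : Fin n → ℂ}
    (hx : ∀ i, x i ≠ 0) : ∃ᶠ y in 𝓝 x, ∀ i j, i ≠ j → theta q (y j / y i) ≠ 0 := by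
  let y (t : ℂ) (i : Fin n) : ℂ := x i * Complex.exp (i * t)
  have hy : Tendsto y (𝓝[≠] 0) (𝓝 x) := by
    have hcont : Continuous y := by fun_prop
    simpa [y] using (hcont.tendsto 0).mono_left nhdsWithin_le_nhds
  refine hy.frequently (Eventually.frequently ?_)
  simp only [eventually_all]
  intro i j hij
  have hd : (j - i : ℂ) ≠ 0 := sub_ne_zero.mpr (mod_cast Fin.val_ne_of_ne hij.symm)
  filter_upwards [eventually_theta_mul_exp_ne_zero hq0 hq1 (div_ne_zero (hx j) (hx i)) hd] with t ht
  rwa [sub_mul, Complex.exp_sub, div_mul_div_comm] at ht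

lemma continuous_pfaff {n : ℕ} : Continuous (pfaff n) := by
  unfold pfaff
  fun_prop

lemma differentiableAt_thetaRatio (hq : |q| < 1) {u : ℂ} (hu : u ≠ 0) (hθ : theta q (-u) ≠ 0) :
    DifferentiableAt ℂ (thetaRatio q) u := by
  unfold thetaRatio
  fun_prop (disch := simp [*])

lemma differentiableAt_thetaZeta (hq : |q| < 1) {u : ℂ} (hu : u ≠ 0) (hθ : theta q (-u) ≠ 0) :
    DifferentiableAt ℂ (thetaZeta q) u := by
  unfold thetaZeta
  fun_prop (disch := simp [*])

theorem pfaff_thetaZeta (hq0 : q ≠ 0) (hq1 : |q| < 1) {m : ℕ} {x : Fin (2 * m + 1) → ℂ}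
    (hx : ∀ i, x i ≠ 0) (hθx : ∀ i j, theta q (-(x j / x i)) ≠ 0) :
    pfaff (2 * m + 1) (Matrix.of fun i j => thetaZeta q (x j / x i)) =
      (qPoch q q / qPoch q (-q)) ^ (2 * m) *
        ∏ i, ∏ j ∈ Finset.Ioi i, thetaRatio q (x j / x i) := by
  have hratio (i j : Fin (2 * m + 1)) : x j / x i ≠ 0 := div_ne_zero (hx j) (hx i)
  have hdiv (i j : Fin (2 * m + 1)) : ContinuousAt (fun y : _ → ℂ => y j / y i) x := by
    have := hx i
    fun_prop (disch := assumption)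
  have hleft : ContinuousAt
      (fun y => pfaff (2 * m + 1) (Matrix.of fun i j => thetaZeta q (y j / y i))) x :=
    continuous_pfaff.continuousAt.comp' <| continuousAt_pi.mpr fun i => continuousAt_pi.mpr fun j =>
      (differentiableAt_thetaZeta hq1 (hratio i j) (hθx i j)).continuousAt.tendsto.comp (hdiv i j)
  have hright : ContinuousAt (fun y : _ → ℂ => (qPoch q q / qPoch q (-q)) ^ (2 * m) *
      ∏ i, ∏ j ∈ Finset.Ioi i, thetaRatio q (y j / y i)) x :=
    continuousAt_const.mul <| tendsto_finsetProd _ fun i _ => tendsto_finsetProd _ fun j _ =>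
      (differentiableAt_thetaRatio hq1 (hratio i j) (hθx i j)).continuousAt.tendsto.comp (hdiv i j)
  have hy : ∀ᶠ y in 𝓝 x, ∀ i, y i ≠ 0 :=
    eventually_all.mpr fun i => (continuousAt_apply i x).eventually_ne (hx i)
  have hθy : ∀ᶠ y in 𝓝 x, ∀ i j, theta q (-(y j / y i)) ≠ 0 :=
    eventually_all.mpr fun i => eventually_all.mpr fun j =>
      ((differentiableAt_theta hq1 (neg_ne_zero.mpr (hratio i j))).continuousAt.tendsto.comp
        (hdiv i j).neg).eventually_ne (hθx i j)
  refine tendsto_nhds_unique_of_frequently_eq hleft hright ?_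
  refine ((frequently_theta_div_ne_zero hq0 hq1 hx).and_eventually (hy.and hθy)).mono ?_
  rintro y ⟨hgeneric, hy, hθy⟩
  exact pfaff_thetaZeta_of_generic hq0 hq1 hy hθy hgeneric

theorem elliptic_pfaffian_odd_general (q : ℝ) (hq0 : q ≠ 0) (hq1 : |q| < 1) (m : ℕ)
    (x : Fin (2 * m + 1) → ℂ) (hx0 : ∀ i, x i ≠ 0)
    (hθ : ∀ i j, i ≠ j → ∀ l : ℤ, x j / x i ≠ -(q : ℂ) ^ l) :
    pfaff (2 * m + 1) (Matrix.of fun i j =>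
        1 + 2 * (x j / x i) * deriv (theta q) (-(x j / x i)) / theta q (-(x j / x i))) =
      (qPoch q (q : ℂ) / qPoch q (-(q : ℂ))) ^ (2 * m) *
        ∏ i : Fin (2 * m + 1), ∏ j ∈ Finset.Ioi i,
          theta q (x j / x i) / theta q (-(x j / x i)) := by
  refine pfaff_thetaZeta hq0 hq1 hx0 fun i j => ?_
  rcases eq_or_ne i j with rfl | hij
  · rw [div_self (hx0 i)]
    exact theta_neg_one_ne_zero hq0 hq1
  · rw [Ne, theta_eq_zero_iff hq0 hq1 (neg_ne_zero.mpr (div_ne_zero (hx0 j) (hx0 i)))]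
    rintro ⟨l, hl⟩
    exact hθ i j hij l (neg_eq_iff_eq_neg.mp hl)

end EllipticPfaffian

/-- The odd elliptic pfaffian evaluation:
`pfaff(1 + 2(x_j/x_i)θ'(−x_j/x_i)/θ(−x_j/x_i))
  = ((q;q)_∞/(−q;q)_∞)^{2m} Π_{i<j} θ(x_j/x_i)/θ(−x_j/x_i)` for `2m+1` variables. -/
theorem elliptic_pfaffian_odd (q : ℝ) (hq0 : 0 < q) (hq1 : q < 1) (m : ℕ)
    (x : Fin (2 * m + 1) → ℂ) (hx0 : ∀ i, x i ≠ 0)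
    (hθ : ∀ i j, i ≠ j → ∀ l : ℤ, x j / x i ≠ -(q : ℂ) ^ l) :
    pfaff (2 * m + 1) (Matrix.of fun i j =>
        1 + 2 * (x j / x i) * deriv (theta q) (-(x j / x i)) / theta q (-(x j / x i))) =
      (qPoch q (q : ℂ) / qPoch q (-(q : ℂ))) ^ (2 * m) *
        ∏ i : Fin (2 * m + 1), ∏ j ∈ Finset.Ioi i,
          theta q (x j / x i) / theta q (-(x j / x i)) := by
  exact elliptic_pfaffian_odd_general q hq0.ne' (abs_lt.mpr ⟨by linarith, hq1⟩) m x hx0 hθ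
end

section
/- Let 0 < q < 1 (real) and m ≥ 1. Then □(q)^{4m²} = (2^{m(2m−1)} / Π_{i=1}^{2m−1} i!) · det_{1≤i,j≤m}( t_{i+j−1} + 4·(−1)^{i+j} · Σ_{k=1}^∞ q^k k^{2i+2j−3}/(1 + (−q)^k) ), where each inner series converges absolutely (note 1 + (−q)^k ≥ 1 − q > 0). -/
/-- The generating function `□(q) = Σ_{n∈ℤ} q^{n²}` for sums of squares. -/
noncomputable def sqGen (q : ℝ) : ℝ := ∑' n : ℤ, q ^ (n.natAbs ^ 2)
/-- The tangent numbers `t_n = (4^n − 1)|B_{2n}|/n`, so that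
`tan(x/2) = Σ_{n≥1} t_n x^{2n−1}/(2n−1)!`. -/
noncomputable def tangentNum (n : ℕ) : ℝ :=
  ((4 : ℝ) ^ n - 1) * |((bernoulli (2 * n) : ℚ) : ℝ)| / n

/-!
The Jordan–Kronecker function `K(z) = ∑ zⁿ / (1 + pⁿ)`, where `n ∈ ℤ` and `|p| < |z| < 1`,
satisfies `K³ = ½ (z d/dz)² K + b K` for a constant `b`: since `1 / (1 + pᵃ) - 1 / (1 + pᵃ⁻ⁿ)` is
`1 - pⁿ` times the `a`-th term of the `n`-th Laurent coefficient of `K²`, the coefficients of `K²`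
and `K³` come from telescoping sums. At `p = -q`, `z = -eˢ` this says that
`y(s) = tanh (s / 2) + 4 ∑_{n ≥ 1} qⁿ / (1 + (-q)ⁿ) sinh (n s) = -2 K(-eˢ)` solves
`y'' = β y + ½ y³`, hence `y'² = y'(0)² + β y² + ¼ y⁴`. Up to sign, the matrix entries are the odd
derivatives of `y` at `0`.

By these two equations, two derivatives of a polynomial in `y` act on its coefficients by a
three-term recursion, so the odd derivatives of `y` at `0` are `y'(0)` times weighted Motzkin path
sums, and the Hankel determinant of those is a product of weights of up and down steps, in which
`β` does not occur.

It remains to see that `y'(0) = □(q)⁴ / 2`, which is Jacobi's four-square theorem. For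
`g(q) = ∑ 2 qⁿ / (1 + q²ⁿ)`, which is `2 K(q)` at `p = q²`, the formula for the coefficients of `K²`
shows that `y'(0) = g(q)² / 2`. Both `f = □²` and `f = g` satisfy `f(q) + f(-q) = 2 f(q²)` and
`f(q) f(-q) = f(-q²)²`, and a positive solution of these equations is determined by its value and
derivative at `q = 0`; hence `g = □²`.
-/

/-- Weighted Motzkin path sums: `motzkinSum up level down n k` is the sum over the paths of length
`n` in `ℕ` from `0` to `k`, where the steps `j → j + 1`, `j → j` and `j + 1 → j` have weights
`up j`, `level j` and `down j`. -/
def motzkinSum {R : Type*} [CommRing R] (up level down : ℕ → R) : ℕ → ℕ → R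
  | 0, k => if k = 0 then 1 else 0
  | n + 1, 0 => down 0 * motzkinSum up level down n 1 + level 0 * motzkinSum up level down n 0
  | n + 1, k + 1 => down (k + 1) * motzkinSum up level down n (k + 2) +
      level (k + 1) * motzkinSum up level down n (k + 1) + up k * motzkinSum up level down n k

section Motzkin

variable {R : Type*} [CommRing R] (up level down : ℕ → R)

lemma motzkinSum_eq_zero_of_lt {n k : ℕ} (h : n < k) : motzkinSum up level down n k = 0 := by
  induction n generalizing k with
  | zero => simp [motzkinSum, h.ne']
  | succ n ih =>
    obtain ⟨k, rfl⟩ : ∃ j, k = j + 1 := ⟨k - 1, by omega⟩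
    simp [motzkinSum, ih (show n < k + 2 by omega), ih (show n < k + 1 by omega),
      ih (show n < k by omega)]

lemma motzkinSum_self (n : ℕ) :
    motzkinSum up level down n n = ∏ k ∈ Finset.range n, up k := by
  induction n with
  | zero => simp [motzkinSum]
  | succ n ih =>
    rw [Finset.prod_range_succ, ← ih, motzkinSum, motzkinSum_eq_zero_of_lt _ _ _ (by omega),
      motzkinSum_eq_zero_of_lt _ _ _ (by omega)]
    ring

lemma motzkinSum_neg (n k : ℕ) :
    motzkinSum (-up) (-level) (-down) n k = (-1) ^ n * motzkinSum up level down n k := by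
  induction n generalizing k with
  | zero => simp [motzkinSum]
  | succ n ih =>
    cases k <;> simp only [motzkinSum, ih, Pi.neg_apply] <;> ring

-- Reversing paths exchanges `up` and `down`: moving one step from the first factor to the second
-- leaves only the boundary term of a telescoping sum.
lemma sum_motzkinSum_succ_mul_sub (i j N : ℕ) :
    ∑ k ∈ Finset.range (N + 1),
        (motzkinSum up level down (i + 1) k * motzkinSum down level up j k -
          motzkinSum up level down i k * motzkinSum down level up (j + 1) k) =
      down N * motzkinSum up level down i (N + 1) * motzkinSum down level up j N -
        up N * motzkinSum up level down i N * motzkinSum down level up j (N + 1) := by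
  induction N with
  | zero =>
    simp only [zero_add, Finset.sum_range_one, motzkinSum]
    ring
  | succ N ih =>
    rw [Finset.sum_range_succ, ih]
    simp only [motzkinSum]
    ring

lemma sum_motzkinSum_mul_motzkinSum {i j N : ℕ} (h : i + j ≤ N) :
    ∑ k ∈ Finset.range (N + 1), motzkinSum up level down i k * motzkinSum down level up j k =
      motzkinSum up level down (i + j) 0 := by
  induction j generalizing i with
  | zero =>
    rw [Finset.sum_eq_single 0] <;> simp +contextual [motzkinSum]
  | succ j ih =>
    have shift := sum_motzkinSum_succ_mul_sub up level down i j N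
    rw [motzkinSum_eq_zero_of_lt _ _ _ (show i < N + 1 by omega),
      motzkinSum_eq_zero_of_lt _ _ _ (show j < N + 1 by omega), Finset.sum_sub_distrib] at shift
    rw [show i + (j + 1) = i + 1 + j by ring, ← ih (by omega)]
    linear_combination -shift

lemma det_of_motzkinSum (m : ℕ) :
    (Matrix.of fun i k : Fin m => motzkinSum up level down i k).det =
      ∏ i ∈ Finset.range m, ∏ k ∈ Finset.range i, up k := by
  rw [Matrix.det_of_isLowerTriangular, Finset.prod_range]
  · exact Finset.prod_congr rfl fun i _ => motzkinSum_self up level down i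
  · exact fun i j hij => motzkinSum_eq_zero_of_lt up level down (by simpa using hij)

theorem det_hankel_motzkinSum (m : ℕ) :
    (Matrix.of fun i j : Fin m => motzkinSum up level down (i + j) 0).det =
      ∏ i ∈ Finset.range m, ∏ k ∈ Finset.range i, up k * down k := by
  have factorization : (Matrix.of fun i j : Fin m => motzkinSum up level down (i + j) 0) =
      (Matrix.of fun i k : Fin m => motzkinSum up level down i k) *
        (Matrix.of fun j k : Fin m => motzkinSum down level up j k).transpose := by
    ext i j
    simp only [Matrix.mul_apply, Matrix.transpose_apply, Matrix.of_apply]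
    rw [← sum_motzkinSum_mul_motzkinSum up level down (show (i : ℕ) + j ≤ 2 * m by omega),
      ← Finset.sum_range fun k =>
        motzkinSum up level down i k * motzkinSum down level up j k]
    refine (Finset.sum_subset (Finset.range_mono (by omega)) fun k _ hk => ?_).symm
    rw [motzkinSum_eq_zero_of_lt up level down (i.isLt.trans_le (by simpa using hk)), zero_mul]
  simp only [factorization, Matrix.det_mul, Matrix.det_transpose, det_of_motzkinSum,
    ← Finset.prod_mul_distrib]

end Motzkin

section QuarticEquation

open Polynomial

/-- The second-order operator `p ↦ (α + βX² + γX⁴) p'' + (βX + 2γX³) p'`. If `y` solves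
`y'² = α + βy² + γy⁴` and `y'' = βy + 2γy³`, then `(p(y))'' = (L p)(y)`. -/
noncomputable def quarticOperator {R : Type*} [CommRing R] (α β γ : R) (p : R[X]) : R[X] :=
  (C α + C β * X ^ 2 + C γ * X ^ 4) * derivative (derivative p) +
    (C β * X + C (2 * γ) * X ^ 3) * derivative p

variable {R : Type*} [CommRing R] (α β γ : R)

lemma coeff_quarticOperator_one (p : R[X]) :
    (quarticOperator α β γ p).coeff 1 = 6 * α * p.coeff 3 + β * p.coeff 1 := by
  simp only [quarticOperator, add_mul, mul_assoc, map_mul, coeff_add, coeff_C_mul,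
    coeff_derivative, coeff_X_pow_mul', Nat.reduceAdd, Nat.not_ofNat_le_one, ↓reduceIte,
    coeff_X_mul, Nat.cast_ofNat, Nat.cast_one, Nat.cast_zero, zero_add, mul_zero, add_zero]
  ring

lemma coeff_quarticOperator_add_three (p : R[X]) (j : ℕ) :
    (quarticOperator α β γ p).coeff (j + 3) = α * ((j + 5) * (j + 4)) * p.coeff (j + 5) +
      β * (j + 3) ^ 2 * p.coeff (j + 3) + γ * ((j + 1) * (j + 2)) * p.coeff (j + 1) := by
  rcases j with _ | j
  · simp only [quarticOperator, add_mul, mul_assoc, map_mul, coeff_add, coeff_C_mul,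
      coeff_derivative, coeff_X_pow_mul', coeff_X_mul, Nat.reduceAdd, Nat.reduceLeDiff, ↓reduceIte,
      Nat.reduceSub, tsub_self, le_refl, Nat.cast_ofNat, Nat.cast_one, Nat.cast_zero, zero_add,
      mul_zero, add_zero]
    ring
  · simp only [quarticOperator, add_mul, mul_assoc, map_mul, coeff_add, coeff_C_mul,
      coeff_derivative, coeff_X_pow_mul', coeff_X_mul, le_add_iff_nonneg_left, zero_le, ↓reduceIte,
      Nat.reduceSubDiff, add_tsub_cancel_right, Nat.cast_add, Nat.cast_one, Nat.cast_ofNat]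
    ring

/-- The Motzkin path sums whose weights are the coefficients of the recursion that
`quarticOperator` induces on the coefficients of the odd powers of `X`. -/
def quarticMotzkinSum : ℕ → ℕ → R :=
  motzkinSum (fun k => γ * ((2 * k + 1) * (2 * k + 2))) (fun k => β * (2 * k + 1) ^ 2)
    (fun k => α * ((2 * k + 2) * (2 * k + 3)))

lemma quarticMotzkinSum_succ_zero (n : ℕ) : quarticMotzkinSum α β γ (n + 1) 0 =
    6 * α * quarticMotzkinSum α β γ n 1 + β * quarticMotzkinSum α β γ n 0 := by
  simp only [quarticMotzkinSum, motzkinSum]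
  push_cast
  ring

lemma quarticMotzkinSum_succ_succ (n k : ℕ) : quarticMotzkinSum α β γ (n + 1) (k + 1) =
    α * ((2 * k + 4) * (2 * k + 5)) * quarticMotzkinSum α β γ n (k + 2) +
      β * (2 * k + 3) ^ 2 * quarticMotzkinSum α β γ n (k + 1) +
      γ * ((2 * k + 1) * (2 * k + 2)) * quarticMotzkinSum α β γ n k := by
  simp only [quarticMotzkinSum, motzkinSum]
  push_cast
  ring

lemma quarticMotzkinSum_neg (n k : ℕ) :
    quarticMotzkinSum (-α) (-β) (-γ) n k = (-1) ^ n * quarticMotzkinSum α β γ n k := by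
  rw [quarticMotzkinSum, quarticMotzkinSum, ← motzkinSum_neg]
  simp only [Pi.neg_def, neg_mul]

lemma coeff_quarticOperator_iterate (n k : ℕ) :
    ((quarticOperator α β γ)^[n] X).coeff (2 * k + 1) = quarticMotzkinSum α β γ n k := by
  induction n generalizing k with
  | zero => simp [quarticMotzkinSum, motzkinSum, coeff_X, eq_comm]
  | succ n ih =>
    rw [Function.iterate_succ_apply']
    rcases k with _ | k
    · rw [coeff_quarticOperator_one, quarticMotzkinSum_succ_zero, ← ih 0, ← ih 1]
    · rw [show 2 * (k + 1) + 1 = 2 * k + 3 by ring, coeff_quarticOperator_add_three,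
        quarticMotzkinSum_succ_succ, ← ih k, ← ih (k + 1), ← ih (k + 2),
        show 2 * (k + 1) + 1 = 2 * k + 3 by ring,
        show 2 * (k + 2) + 1 = 2 * k + 5 by ring]
      push_cast
      ring

variable {A : Type*} [CommRing A] [Algebra R A] {α β γ} {D : Derivation R A A} {y : A}

lemma derivation_derivation_aeval
    (h₁ : D y ^ 2 = algebraMap R A α + algebraMap R A β * y ^ 2 + algebraMap R A γ * y ^ 4)
    (h₂ : D (D y) = algebraMap R A β * y + 2 * algebraMap R A γ * y ^ 3) (p : R[X]) :
    D (D (aeval y p)) = aeval y (quarticOperator α β γ p) := by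
  simp only [Derivation.map_aeval, Derivation.leibniz, smul_eq_mul, h₂, quarticOperator, map_add,
    map_mul, map_pow, aeval_C, aeval_X, map_ofNat]
  linear_combination aeval y (derivative (derivative p)) * h₁

lemma derivation_iterate_two_mul
    (h₁ : D y ^ 2 = algebraMap R A α + algebraMap R A β * y ^ 2 + algebraMap R A γ * y ^ 4)
    (h₂ : D (D y) = algebraMap R A β * y + 2 * algebraMap R A γ * y ^ 3) (n : ℕ) :
    D^[2 * n] y = aeval y ((quarticOperator α β γ)^[n] X) := by
  induction n with
  | zero => simp
  | succ n ih =>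
    rw [show 2 * (n + 1) = 2 * n + 1 + 1 by ring, Function.iterate_succ_apply',
      Function.iterate_succ_apply', ih, derivation_derivation_aeval h₁ h₂,
      Function.iterate_succ_apply']

end QuarticEquation

section PowerSeriesSolution

open PowerSeries

variable {R : Type*} [CommRing R] {β γ : R} {F : R⟦X⟧}

lemma derivative_sq_eq_of_derivative_derivative_eq [IsAddTorsionFree R]
    (hF : constantCoeff F = 0) (h : d⁄dX R (d⁄dX R F) = C β * F + 2 * C γ * F ^ 3) :
    d⁄dX R F ^ 2 = C (coeff 1 F ^ 2) + C β * F ^ 2 + C γ * F ^ 4 := by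
  apply derivative.ext
  · simp only [pow_succ, pow_zero, one_mul, map_add, Derivation.leibniz, h, smul_eq_mul,
      map_mul, derivative_C]
    ring
  · have : constantCoeff (d⁄dX R F) = coeff 1 F := by
      simpa using coeff_derivative F 0
    simp [hF, this]

theorem constantCoeff_iterate_derivative_of_derivative_derivative_eq [IsAddTorsionFree R]
    (hF : constantCoeff F = 0) (h : d⁄dX R (d⁄dX R F) = C β * F + 2 * C γ * F ^ 3) (n : ℕ) :
    constantCoeff ((d⁄dX R)^[2 * n + 1] F) =
      coeff 1 F * quarticMotzkinSum (coeff 1 F ^ 2) β γ n 0 := by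
  have constantCoeff_aeval (p : Polynomial R) :
      constantCoeff (Polynomial.aeval F p) = p.coeff 0 := by
    rw [Polynomial.aeval_def, Polynomial.hom_eval₂, hF, Polynomial.eval₂_at_zero]
    rfl
  have first : constantCoeff (d⁄dX R F) = coeff 1 F := by
    simpa using coeff_derivative F 0
  rw [Function.iterate_succ_apply',
    derivation_iterate_two_mul (derivative_sq_eq_of_derivative_derivative_eq hF h) h,
    Derivation.map_aeval, smul_eq_mul, map_mul, constantCoeff_aeval, Polynomial.coeff_derivative,
    first, ← coeff_quarticOperator_iterate]
  simp [mul_comm]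

end PowerSeriesSolution

section HankelEvaluation

open Nat Finset

lemma prod_factorial_two_mul (m : ℕ) :
    ∏ i ∈ range m, ((2 * i)! * (2 * i + 1)!) = ∏ i ∈ Icc 1 (2 * m - 1), i ! := by
  rw [prod_Icc_factorial]
  induction m with
  | zero => simp
  | succ m ih =>
    rw [prod_range_succ, ih]
    rcases m with _ | m
    · simp
    · rw [show 2 * (m + 1 + 1) - 1 = 2 * m + 1 + 1 + 1 by omega,
        show 2 * (m + 1) - 1 = 2 * m + 1 by omega, show 2 * (m + 1) = 2 * m + 1 + 1 by ring]
      simp only [superFactorial_succ]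
      ring

lemma prod_mul_ascending_pairs {R : Type*} [CommRing R] (α γ : R) (i : ℕ) :
    ∏ k ∈ range i, (γ * ((2 * k + 1) * (2 * k + 2))) * (α * ((2 * k + 2) * (2 * k + 3))) =
      (α * γ) ^ i * ((2 * i)! * (2 * i + 1)! : ℕ) := by
  induction i with
  | zero => simp
  | succ i ih =>
    rw [prod_range_succ, ih, show 2 * (i + 1) = 2 * i + 1 + 1 by ring]
    simp only [factorial_succ]
    push_cast
    ring

theorem det_hankel_quarticMotzkinSum {R : Type*} [CommRing R] (α β γ : R) (m : ℕ) :
    (Matrix.of fun i j : Fin m => quarticMotzkinSum α β γ (i + j) 0).det =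
      (∏ i ∈ range m, (α * γ) ^ i) * ∏ i ∈ Icc 1 (2 * m - 1), (i ! : R) := by
  rw [← cast_prod, ← prod_factorial_two_mul, cast_prod, ← prod_mul_distrib]
  simp only [← prod_mul_ascending_pairs]
  exact det_hankel_motzkinSum _ _ _ m

lemma pow_mul_prod_sq_pow {R : Type*} [CommRing R] (y : R) (m : ℕ) :
    y ^ m * ∏ i ∈ range m, (y ^ 2) ^ i = y ^ m ^ 2 := by
  rw [prod_pow_eq_pow_sum, ← pow_mul, mul_comm 2, sum_range_id_mul_two, ← pow_add]
  congr 1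
  rcases m with _ | m
  · rfl
  · rw [Nat.add_sub_cancel]; ring

theorem det_hankel_neg_one_pow_mul_quarticMotzkinSum (y β : ℝ) (m : ℕ) :
    (Matrix.of fun i j : Fin m => (-1 : ℝ) ^ (i + j : ℕ) *
        (2 * y * quarticMotzkinSum ((2 * y) ^ 2) β (1 / 4) (i + j) 0)).det =
      2 ^ m * y ^ m ^ 2 * ∏ i ∈ Icc 1 (2 * m - 1), (i ! : ℝ) := by
  have absorb_signs : (Matrix.of fun i j : Fin m => (-1 : ℝ) ^ (i + j : ℕ) *
        (2 * y * quarticMotzkinSum ((2 * y) ^ 2) β (1 / 4) (i + j) 0)) = (2 * y) • Matrix.of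
      fun i j : Fin m => quarticMotzkinSum (-(2 * y) ^ 2) (-β) (-(1 / 4)) (i + j) 0 := by
    ext i j
    simp only [quarticMotzkinSum_neg, Matrix.of_apply, Matrix.smul_apply, smul_eq_mul,
      mul_left_comm]
  rw [absorb_signs, Matrix.det_smul, det_hankel_quarticMotzkinSum, Fintype.card_fin,
    show -(2 * y) ^ 2 * -(1 / 4) = y ^ 2 by ring, ← pow_mul_prod_sq_pow, mul_pow]
  ring

end HankelEvaluation

section IntegerSeries

open Filter Topology

lemma hasSum_convolution_prod {𝕜 : Type*} [NormedField 𝕜] [CompleteSpace 𝕜] {f g : ℤ → 𝕜} {z : 𝕜}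
    (hz : z ≠ 0) (hf : Summable fun n => ‖f n * z ^ n‖) (hg : Summable fun n => ‖g n * z ^ n‖) :
    HasSum (fun x : ℤ × ℤ => f x.2 * g (x.1 - x.2) * z ^ x.1)
      ((∑' n, f n * z ^ n) * ∑' n, g n * z ^ n) := by
  let e : ℤ × ℤ ≃ ℤ × ℤ :=
    { toFun x := (x.2, x.1 - x.2)
      invFun y := (y.1 + y.2, y.1)
      left_inv x := by simp
      right_inv y := by simp }
  have summable := summable_mul_of_summable_norm hf hg
  have product := hf.of_norm.hasSum.mul hg.of_norm.hasSum summable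
  refine (e.hasSum_iff.2 product).congr_fun fun ⟨n, a⟩ => ?_
  have split : z ^ n = z ^ a * z ^ (n - a) := by rw [← zpow_add₀ hz, add_sub_cancel]
  simp only [Function.comp_apply, e, Equiv.coe_fn_mk, split]
  ring

lemma summable_convolution {𝕜 : Type*} [NormedField 𝕜] [CompleteSpace 𝕜] {f g : ℤ → 𝕜} {z : 𝕜}
    (hz : z ≠ 0) (hf : Summable fun n => ‖f n * z ^ n‖) (hg : Summable fun n => ‖g n * z ^ n‖)
    (n : ℤ) : Summable fun a => f a * g (n - a) :=
  (summable_mul_right_iff (zpow_ne_zero n hz)).1 <|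
    (hasSum_convolution_prod hz hf hg).summable.prod_factor n

lemma hasSum_tsum_convolution {𝕜 : Type*} [NormedField 𝕜] [CompleteSpace 𝕜] {f g : ℤ → 𝕜} {z : 𝕜}
    (hz : z ≠ 0) (hf : Summable fun n => ‖f n * z ^ n‖) (hg : Summable fun n => ‖g n * z ^ n‖) :
    HasSum (fun n => (∑' a, f a * g (n - a)) * z ^ n)
      ((∑' n, f n * z ^ n) * ∑' n, g n * z ^ n) :=
  (hasSum_convolution_prod hz hf hg).prod_fiberwise fun n =>
    (summable_convolution hz hf hg n).hasSum.mul_right _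

lemma hasSum_int_sub_shift {f : ℤ → ℝ} {l l' : ℝ} (hf : Summable fun a => f a - f (a - 1))
    (top : Tendsto f atTop (𝓝 l)) (bot : Tendsto f atBot (𝓝 l')) :
    HasSum (fun a => f a - f (a - 1)) (l - l') := by
  have partial_sums (N : ℕ) :
      ∑ a ∈ Finset.Ico (-N : ℤ) N, (f a - f (a - 1)) = f (N - 1) - f (-N - 1) := by
    have := Finset.sum_Ico_int_sub N fun a => -f (a - 1)
    simpa [add_sub_assoc, sub_eq_neg_add, add_comm] using this
  have exhaustion : Tendsto (fun N : ℕ => Finset.Ico (-N : ℤ) N) atTop atTop :=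
    Finset.tendsto_Ico_neg_atTop_atTop.comp tendsto_natCast_atTop_atTop
  have cast : Tendsto (fun N : ℕ => (N : ℤ)) atTop atTop := tendsto_natCast_atTop_atTop
  have limit := (top.comp (tendsto_atTop_add_const_right _ (-1) cast)).sub
    (bot.comp (tendsto_atBot_add_const_right _ (-1) (tendsto_neg_atTop_atBot.comp cast)))
  have sum_eq := tendsto_nhds_unique (hf.hasSum.comp exhaustion)
    (limit.congr fun N => (partial_sums N).symm)
  exact sum_eq ▸ hf.hasSum

end IntegerSeries

/-- The Laurent coefficients `1 / (1 + p ^ n)` of the Jordan–Kronecker function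
`∑ n, z ^ n / (1 + p ^ n)`. -/
noncomputable def kroneckerCoeff (p : ℝ) (n : ℤ) : ℝ := 1 / (1 + p ^ n)

/-- The Laurent coefficients of the square of the Jordan–Kronecker function. -/
noncomputable def kroneckerSqCoeff (p : ℝ) (n : ℤ) : ℝ :=
  ∑' a, kroneckerCoeff p a * kroneckerCoeff p (n - a)

section JordanKronecker

open Filter Topology

variable {p : ℝ}

lemma abs_zpow_ne_one (hp : |p| < 1) {n : ℤ} (hn : n ≠ 0) : |p ^ n| ≠ 1 := by
  rw [abs_zpow, Ne, zpow_eq_one_iff_of_ne_zero₀ hn]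
  rintro (h | h) <;> linarith [abs_nonneg p, h]

lemma one_add_zpow_ne_zero (hp : |p| < 1) (n : ℤ) : 1 + p ^ n ≠ 0 := by
  rcases eq_or_ne n 0 with rfl | hn
  · norm_num
  · intro h
    apply abs_zpow_ne_one hp hn
    rw [eq_neg_of_add_eq_zero_right h, abs_neg, abs_one]

lemma one_sub_zpow_ne_zero (hp : |p| < 1) {n : ℤ} (hn : n ≠ 0) : 1 - p ^ n ≠ 0 := by
  intro h
  apply abs_zpow_ne_one hp hn
  rw [← sub_eq_zero.1 h, abs_one]

lemma kroneckerCoeff_neg (hp0 : p ≠ 0) (hp : |p| < 1) (n : ℤ) :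
    kroneckerCoeff p (-n) = p ^ n * kroneckerCoeff p n := by
  rw [kroneckerCoeff, kroneckerCoeff, mul_one_div, div_eq_div_iff (one_add_zpow_ne_zero hp (-n))
    (one_add_zpow_ne_zero hp n), mul_add (p ^ n), zpow_neg, mul_inv_cancel₀ (zpow_ne_zero n hp0)]
  ring

lemma kroneckerCoeff_neg_eq_one_sub (hp0 : p ≠ 0) (hp : |p| < 1) (n : ℤ) :
    kroneckerCoeff p (-n) = 1 - kroneckerCoeff p n := by
  rw [kroneckerCoeff_neg hp0 hp, kroneckerCoeff]
  field_simp [one_add_zpow_ne_zero hp n]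
  ring

lemma abs_kroneckerCoeff_natCast_le (hp : |p| < 1) (k : ℕ) :
    |kroneckerCoeff p k| ≤ 1 / (1 - |p|) := by
  rw [kroneckerCoeff, abs_div, abs_one, zpow_natCast]
  refine one_div_le_one_div_of_le (by linarith) ?_
  rcases k with _ | k
  · norm_num
    linarith [abs_nonneg p]
  · have power_le : |p ^ (k + 1)| ≤ |p| := by
      rw [abs_pow]
      exact pow_le_of_le_one (abs_nonneg p) hp.le k.succ_ne_zero
    have := abs_sub_abs_le_abs_sub 1 (-p ^ (k + 1))
    rw [abs_one, abs_neg, sub_neg_eq_add] at this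
    linarith

lemma summable_pow_mul_kroneckerCoeff_mul_zpow (hp0 : p ≠ 0) (hp : |p| < 1) (j : ℕ) {z : ℝ}
    (hz1 : |p| < |z|) (hz2 : |z| < 1) :
    Summable fun n : ℤ => (n : ℝ) ^ j * kroneckerCoeff p n * z ^ n := by
  have hz : 0 < |z| := (abs_nonneg p).trans_lt hz1
  have majorant {r : ℝ} (hr : |r| < 1) :
      Summable fun k : ℕ => 1 / (1 - |p|) * |(k : ℝ) ^ j * r ^ k| := by
    have := summable_pow_mul_geometric_of_norm_lt_one (R := ℝ) j hr
    exact this.abs.mul_left _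
  have term_le (r : ℝ) (k : ℕ) : |(k : ℝ) ^ j * kroneckerCoeff p k * r ^ k| ≤
      1 / (1 - |p|) * |(k : ℝ) ^ j * r ^ k| := by
    rw [mul_right_comm, abs_mul, mul_comm]
    exact mul_le_mul_of_nonneg_right (abs_kroneckerCoeff_natCast_le hp k) (abs_nonneg _)
  apply Summable.of_nat_of_neg
  · exact Summable.of_norm_bounded (majorant hz2) fun k => by simpa using term_le z k
  · have ratio_lt_one : |p / z| < 1 := by rwa [abs_div, div_lt_one hz]
    refine Summable.of_norm_bounded (majorant ratio_lt_one) fun k => ?_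
    refine le_of_eq_of_le ?_ (term_le (p / z) k)
    rw [kroneckerCoeff_neg hp0 hp, zpow_neg, zpow_natCast, zpow_natCast, Int.cast_neg,
      Int.cast_natCast, div_pow]
    simp only [Real.norm_eq_abs, abs_mul, abs_div, abs_pow, abs_neg, abs_inv]
    ring

lemma kroneckerCoeff_sub_shift (hp0 : p ≠ 0) (hp : |p| < 1) (n a : ℤ) :
    kroneckerCoeff p a - kroneckerCoeff p (a - n) =
      (1 - p ^ n) * (kroneckerCoeff p a * kroneckerCoeff p (n - a)) := by
  have h1 := one_add_zpow_ne_zero hp a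
  have h2 := one_add_zpow_ne_zero hp (n - a)
  have h3 : p ^ n = p ^ a * p ^ (n - a) := by rw [← zpow_add₀ hp0, add_sub_cancel]
  rw [← neg_sub n a, kroneckerCoeff_neg hp0 hp, kroneckerCoeff, kroneckerCoeff, h3]
  field_simp
  ring

lemma summable_pow_mul_kroneckerCoeff_sub_shift (hp0 : p ≠ 0) (hp : |p| < 1) (j : ℕ) (n : ℤ) :
    Summable fun a : ℤ => (a : ℝ) ^ j * (kroneckerCoeff p a - kroneckerCoeff p (a - n)) := by
  obtain ⟨z, hz1, hz2⟩ := exists_between hp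
  have hz : 0 < z := (abs_nonneg p).trans_lt hz1
  rw [← abs_of_pos hz] at hz1 hz2
  have summable (j : ℕ) := (summable_pow_mul_kroneckerCoeff_mul_zpow hp0 hp j hz1 hz2).norm
  have := (summable_convolution hz.ne' (summable j) (by simpa using summable 0) n).mul_left
    (1 - p ^ n)
  refine this.congr fun a => ?_
  rw [kroneckerCoeff_sub_shift hp0 hp]
  ring

lemma kroneckerCoeff_sub_shift_add (m n a : ℤ) :
    kroneckerCoeff p a - kroneckerCoeff p (a - (m + n)) =
      (kroneckerCoeff p a - kroneckerCoeff p (a - m)) +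
        (kroneckerCoeff p (a - m) - kroneckerCoeff p (a - m - n)) := by
  rw [sub_add_eq_sub_sub]
  ring

lemma tendsto_kroneckerCoeff_atTop (hp : |p| < 1) :
    Tendsto (kroneckerCoeff p) atTop (𝓝 1) := by
  have zpow_tendsto : Tendsto (fun n : ℤ => p ^ n) atTop (𝓝 0) := by
    rw [← Nat.map_cast_int_atTop, tendsto_map'_iff]
    simpa [Function.comp_def] using tendsto_pow_atTop_nhds_zero_of_abs_lt_one hp
  have inv_tendsto := (zpow_tendsto.const_add 1).inv₀ (by norm_num)
  rw [add_zero, inv_one] at inv_tendsto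
  exact inv_tendsto.congr fun n => (one_div _).symm

lemma hasSum_kroneckerCoeff_sub_shift (hp0 : p ≠ 0) (hp : |p| < 1) (n : ℤ) :
    HasSum (fun a => kroneckerCoeff p a - kroneckerCoeff p (a - n)) n := by
  have summable (n : ℤ) : Summable fun a => kroneckerCoeff p a - kroneckerCoeff p (a - n) := by
    simpa using summable_pow_mul_kroneckerCoeff_sub_shift hp0 hp 0 n
  let T : ℤ →+ ℝ := AddMonoidHom.mk'
    (fun n => ∑' a, (kroneckerCoeff p a - kroneckerCoeff p (a - n))) fun m n => by
      have shifted := (Equiv.subRight m).hasSum_iff.2 (summable n).hasSum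
      exact (((summable m).hasSum.add shifted).congr_fun fun a =>
        kroneckerCoeff_sub_shift_add m n a).tsum_eq
  have T_one : T 1 = 1 := by
    have top := tendsto_kroneckerCoeff_atTop hp
    have bot : Tendsto (kroneckerCoeff p) atBot (𝓝 (1 - 1)) :=
      ((top.comp tendsto_neg_atBot_atTop).const_sub 1).congr fun n => by
        rw [Function.comp_apply, kroneckerCoeff_neg_eq_one_sub hp0 hp, sub_sub_cancel]
    simpa using! (hasSum_int_sub_shift (summable 1) top bot).tsum_eq
  have T_eq : T n = n := by rw [AddMonoidHom.apply_int, T_one, zsmul_one]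
  exact T_eq ▸ (summable n).hasSum

lemma hasSum_mul_kroneckerCoeff_sub_shift (hp0 : p ≠ 0) (hp : |p| < 1) (n : ℤ) :
    HasSum (fun a : ℤ => a * (kroneckerCoeff p a - kroneckerCoeff p (a - n)))
      ((n : ℝ) ^ 2 / 2) := by
  have summable : Summable fun a : ℤ => a * (kroneckerCoeff p a - kroneckerCoeff p (a - n)) := by
    simpa using summable_pow_mul_kroneckerCoeff_sub_shift hp0 hp 1 n
  have reflected := ((Equiv.subLeft n).hasSum_iff).2 summable.hasSum
  have complement :=
    ((hasSum_kroneckerCoeff_sub_shift hp0 hp n).mul_left (n : ℝ)).sub summable.hasSum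
  have := reflected.unique <| complement.congr_fun fun a => by
    rw [Function.comp_apply, Equiv.subLeft_apply, sub_sub_cancel_left,
      kroneckerCoeff_neg_eq_one_sub hp0 hp, ← neg_sub a n, kroneckerCoeff_neg_eq_one_sub hp0 hp]
    push_cast
    ring
  convert summable.hasSum using 1
  linarith

lemma tsum_neg_one_zpow_mul_kroneckerCoeff_sub_shift (hp0 : p ≠ 0) (hp : |p| < 1) {n : ℤ}
    (hn : Even n) :
    ∑' a : ℤ, (-1 : ℝ) ^ a * (kroneckerCoeff p a - kroneckerCoeff p (a - n)) = 0 := by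
  set A : ℤ → ℝ := fun n =>
    ∑' a : ℤ, (-1 : ℝ) ^ a * (kroneckerCoeff p a - kroneckerCoeff p (a - n))
  have summable (n : ℤ) :
      Summable fun a : ℤ => (-1 : ℝ) ^ a * (kroneckerCoeff p a - kroneckerCoeff p (a - n)) :=
    .of_norm_bounded (hasSum_kroneckerCoeff_sub_shift hp0 hp n).summable.norm fun a => by
      rw [norm_mul, norm_zpow, norm_neg, norm_one, one_zpow, one_mul]
  have cocycle (m n : ℤ) : A (m + n) = A m + (-1) ^ m * A n := by
    have shifted := ((Equiv.subRight m).hasSum_iff.2 (summable n).hasSum).mul_left ((-1 : ℝ) ^ m)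
    refine (((summable m).hasSum.add shifted).congr_fun fun a => ?_).tsum_eq
    rw [kroneckerCoeff_sub_shift_add m n, Function.comp_apply, Equiv.subRight_apply, ← mul_assoc,
      ← zpow_add₀ (by norm_num), add_sub_cancel]
    ring
  have commuted := cocycle n 1
  rw [add_comm, cocycle 1 n, hn.neg_one_zpow] at commuted
  change A n = 0
  linarith

lemma kroneckerSqCoeff_eq (hp0 : p ≠ 0) (hp : |p| < 1) {n : ℤ} (hn : n ≠ 0) :
    kroneckerSqCoeff p n = n / (1 - p ^ n) := by
  rw [eq_div_iff (one_sub_zpow_ne_zero hp hn), mul_comm, kroneckerSqCoeff, ← tsum_mul_left,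
    ← (hasSum_kroneckerCoeff_sub_shift hp0 hp n).tsum_eq]
  exact tsum_congr fun a => (kroneckerCoeff_sub_shift hp0 hp n a).symm

lemma kroneckerSqCoeff_mul (hp0 : p ≠ 0) (hp : |p| < 1) (n a : ℤ) :
    kroneckerSqCoeff p a * kroneckerCoeff p (n - a) =
      kroneckerCoeff p n * ((if a = 0 then kroneckerSqCoeff p 0
        else a * (1 / (1 - p ^ a) - kroneckerCoeff p a)) +
          a * (kroneckerCoeff p a - kroneckerCoeff p (a - n))) := by
  split_ifs with ha
  · simp [ha, mul_comm]
  · have h1 := one_sub_zpow_ne_zero hp ha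
    have h2 := one_add_zpow_ne_zero hp (n - a)
    have h3 := one_add_zpow_ne_zero hp n
    have h4 : p ^ n = p ^ a * p ^ (n - a) := by rw [← zpow_add₀ hp0, add_sub_cancel]
    rw [kroneckerSqCoeff_eq hp0 hp ha, ← neg_sub n a, kroneckerCoeff_neg hp0 hp]
    simp only [kroneckerCoeff]
    rw [h4] at h3 ⊢
    field_simp
    ring

lemma exists_tsum_kroneckerSqCoeff_mul (hp0 : p ≠ 0) (hp : |p| < 1) :
    ∃ b : ℝ, ∀ n : ℤ, ∑' a, kroneckerSqCoeff p a * kroneckerCoeff p (n - a) =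
      1 / 2 * (n ^ 2 * kroneckerCoeff p n) + b * kroneckerCoeff p n := by
  set F : ℤ → ℝ := fun a =>
    if a = 0 then kroneckerSqCoeff p 0 else a * (1 / (1 - p ^ a) - kroneckerCoeff p a)
  obtain ⟨z, hz1, hz2⟩ := exists_between hp
  have hz : 0 < z := (abs_nonneg p).trans_lt hz1
  rw [← abs_of_pos hz] at hz1 hz2
  have summable : Summable fun n => ‖kroneckerCoeff p n * z ^ n‖ := by
    simpa using (summable_pow_mul_kroneckerCoeff_mul_zpow hp0 hp 0 hz1 hz2).norm
  have summable_sq : Summable fun n => ‖kroneckerSqCoeff p n * z ^ n‖ :=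
    (hasSum_tsum_convolution hz.ne' summable summable).summable.norm
  have summable_F : Summable F := by
    have at_zero := summable_convolution hz.ne' summable_sq summable 0
    simp only [kroneckerSqCoeff_mul hp0 hp, sub_zero, sub_self, mul_zero, add_zero] at at_zero
    exact (summable_mul_left_iff (one_div_ne_zero (one_add_zpow_ne_zero hp 0))).1 at_zero
  refine ⟨∑' a, F a, fun n => ?_⟩
  simp only [kroneckerSqCoeff_mul hp0 hp]
  rw [((summable_F.hasSum.add (hasSum_mul_kroneckerCoeff_sub_shift hp0 hp n)).mul_left _).tsum_eq]
  ring

lemma exists_tsum_kroneckerCoeff_mul_zpow_pow_three (hp0 : p ≠ 0) (hp : |p| < 1) :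
    ∃ b : ℝ, ∀ z : ℝ, |p| < |z| → |z| < 1 →
      (∑' n : ℤ, kroneckerCoeff p n * z ^ n) ^ 3 =
        1 / 2 * (∑' n : ℤ, n ^ 2 * kroneckerCoeff p n * z ^ n) +
          b * ∑' n : ℤ, kroneckerCoeff p n * z ^ n := by
  obtain ⟨b, coeff_cube⟩ := exists_tsum_kroneckerSqCoeff_mul hp0 hp
  refine ⟨b, fun z hz1 hz2 => ?_⟩
  have hz : z ≠ 0 := abs_pos.1 ((abs_nonneg p).trans_lt hz1)
  have summable : Summable fun n => kroneckerCoeff p n * z ^ n := by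
    simpa using summable_pow_mul_kroneckerCoeff_mul_zpow hp0 hp 0 hz1 hz2
  have square : HasSum (fun n => kroneckerSqCoeff p n * z ^ n)
      ((∑' n, kroneckerCoeff p n * z ^ n) * ∑' n, kroneckerCoeff p n * z ^ n) :=
    hasSum_tsum_convolution hz summable.norm summable.norm
  have cube := hasSum_tsum_convolution hz square.summable.norm summable.norm
  have second := (summable_pow_mul_kroneckerCoeff_mul_zpow hp0 hp 2 hz1 hz2).hasSum
  have := cube.unique <| ((second.mul_left (1 / 2)).add (summable.hasSum.mul_left b)).congr_fun
    fun n => by rw [coeff_cube]; ring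
  rw [← this, square.tsum_eq]
  ring

end JordanKronecker

section LambertSeries

lemma tsum_int_eq_zero_add_two_mul_tsum_succ {f : ℤ → ℝ} (hf : Summable f)
    (even : ∀ n, f (-n) = f n) : ∑' n, f n = f 0 + 2 * ∑' k : ℕ, f (k + 1) := by
  rw [tsum_int_eq_zero_add_two_mul_tsum_pnat even hf,
    tsum_pnat_eq_tsum_succ (f := fun k : ℕ => f k)]
  simp only [Nat.cast_succ, two_nsmul, two_mul]

lemma summable_lambert {x ε : ℝ} (hx : |x| < 1) (hε : |ε| ≤ 1) :
    Summable fun y : ℕ × ℕ =>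
      ε ^ (y.1 + 1) * ((-1) ^ y.2 * ((y.2 : ℝ) + 1) * x ^ ((y.1 + 1) * (y.2 + 1))) := by
  have hx0 := abs_nonneg x
  have geometric : Summable fun m : ℕ => |x| ^ m := summable_geometric_of_lt_one hx0 hx
  have derived : Summable fun d : ℕ => ((d : ℝ) + 1) * |x| ^ d := by
    have := summable_pow_mul_geometric_of_norm_lt_one (R := ℝ) 1 (r := |x|) (by simpa using hx)
    exact (this.add geometric).congr fun d => by ring
  refine Summable.of_norm_bounded (geometric.mul_of_nonneg derived (fun m => by positivity)
    fun d => by positivity) fun ⟨m, d⟩ => ?_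
  have exponent_le : m + d ≤ (m + 1) * (d + 1) := by nlinarith
  rw [norm_mul, norm_mul, norm_mul, norm_pow, norm_pow, norm_pow, norm_neg, norm_one, one_pow,
    one_mul, Real.norm_of_nonneg (by positivity : (0 : ℝ) ≤ d + 1), mul_left_comm (|x| ^ m),
    ← pow_add]
  exact (mul_le_of_le_one_left (by positivity) (pow_le_one₀ (abs_nonneg ε) hε)).trans
    (mul_le_mul_of_nonneg_left (pow_le_pow_of_le_one hx0 hx.le exponent_le) (by positivity))

lemma hasSum_lambert_swap {x ε : ℝ} (hx : |x| < 1) (hε : |ε| ≤ 1) :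
    HasSum (fun d : ℕ => ((d : ℝ) + 1) * ((-1) ^ d * (ε * x ^ (d + 1) / (1 - ε * x ^ (d + 1)))))
      (∑' m : ℕ, ε ^ (m + 1) * (x ^ (m + 1) / (1 + x ^ (m + 1)) ^ 2)) := by
  have pow_lt (m : ℕ) : |x ^ (m + 1)| < 1 := by
    rw [abs_pow]
    exact pow_lt_one₀ (abs_nonneg x) hx m.succ_ne_zero
  have row (m : ℕ) : HasSum
      (fun d : ℕ => ε ^ (m + 1) * ((-1) ^ d * ((d : ℝ) + 1) * x ^ ((m + 1) * (d + 1))))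
      (ε ^ (m + 1) * (x ^ (m + 1) / (1 + x ^ (m + 1)) ^ 2)) := by
    have := hasSum_coe_mul_geometric_of_norm_lt_one (r := -x ^ (m + 1)) (by simpa using pow_lt m)
    rw [← hasSum_nat_add_iff' 1, Finset.sum_range_one, Nat.cast_zero, zero_mul, sub_zero,
      neg_div, sub_neg_eq_add] at this
    refine HasSum.mul_left _ (neg_neg (x ^ (m + 1) / _) ▸ this.neg.congr_fun fun d => ?_)
    rw [pow_mul, neg_pow (x ^ (m + 1)), Nat.cast_succ]
    ring
  have column (d : ℕ) : HasSum
      (fun m : ℕ => ε ^ (m + 1) * ((-1) ^ d * ((d : ℝ) + 1) * x ^ ((m + 1) * (d + 1))))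
      (((d : ℝ) + 1) * ((-1) ^ d * (ε * x ^ (d + 1) / (1 - ε * x ^ (d + 1))))) := by
    have ratio_lt : |ε * x ^ (d + 1)| < 1 := by
      rw [abs_mul]
      exact (mul_le_of_le_one_left (abs_nonneg _) hε).trans_lt (pow_lt d)
    have := (hasSum_geometric_of_abs_lt_one ratio_lt).mul_left
      (((d : ℝ) + 1) * ((-1) ^ d * (ε * x ^ (d + 1))))
    rw [mul_assoc, mul_assoc, ← div_eq_mul_inv] at this
    refine this.congr_fun fun m => ?_
    rw [mul_pow, ← pow_mul]
    ring
  have summable := summable_lambert hx hε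
  rw [(summable.hasSum.prod_fiberwise row).tsum_eq]
  exact ((Equiv.prodComm ℕ ℕ).hasSum_iff.2 summable.hasSum).prod_fiberwise column

end LambertSeries

/-- The series `∑ n, 2 q ^ n / (1 + q ^ (2 n))` of Jacobi's two-square theorem. -/
noncomputable def twoSquareSeries (q : ℝ) : ℝ := 2 * ∑' n : ℤ, kroneckerCoeff (q ^ 2) n * q ^ n

section TwoSquareSeries

variable {q : ℝ}

lemma abs_sq_lt_one (hq : |q| < 1) : |q ^ 2| < 1 := by
  rw [abs_pow]
  exact pow_lt_one₀ (abs_nonneg q) hq two_ne_zero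

lemma summable_kroneckerCoeff_sq_mul_zpow (hq0 : q ≠ 0) (hq : |q| < 1) :
    Summable fun n : ℤ => kroneckerCoeff (q ^ 2) n * q ^ n := by
  have sq_lt : |q ^ 2| < |q| := by
    rw [abs_pow, sq]
    exact mul_lt_of_lt_one_left (abs_pos.2 hq0) hq
  simpa using
    summable_pow_mul_kroneckerCoeff_mul_zpow (pow_ne_zero 2 hq0) (abs_sq_lt_one hq) 0 sq_lt hq

lemma kroneckerCoeff_mul_kroneckerCoeff_neg (hq0 : q ≠ 0) (hq : |q| < 1) (n : ℤ) :
    kroneckerCoeff q n * kroneckerCoeff q (-n) = q ^ n / (1 + q ^ n) ^ 2 := by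
  rw [kroneckerCoeff_neg hq0 hq, kroneckerCoeff]
  field_simp [one_add_zpow_ne_zero hq n]

lemma kroneckerSqCoeff_sq_mul_zpow_neg (hq0 : q ≠ 0) (hq : |q| < 1) (n : ℤ) :
    kroneckerSqCoeff (q ^ 2) (-n) * q ^ (-n) = kroneckerSqCoeff (q ^ 2) n * q ^ n := by
  rcases eq_or_ne n 0 with rfl | hn
  · rfl
  · have hp0 := pow_ne_zero 2 hq0
    have h1 := one_sub_zpow_ne_zero (abs_sq_lt_one hq) hn
    have h2 := one_sub_zpow_ne_zero (abs_sq_lt_one hq) (neg_ne_zero.2 hn)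
    have h3 := zpow_ne_zero n hq0
    have h4 : (q ^ 2) ^ n = (q ^ n) ^ 2 := by rw [sq, mul_zpow, sq]
    rw [kroneckerSqCoeff_eq hp0 (abs_sq_lt_one hq) hn,
      kroneckerSqCoeff_eq hp0 (abs_sq_lt_one hq) (neg_ne_zero.2 hn)]
    rw [zpow_neg, h4] at h2
    rw [h4] at h1
    rw [zpow_neg, zpow_neg, h4, Int.cast_neg]
    have h5 : (q ^ n) ^ 2 - 1 ≠ 0 := fun h => h1 (by linarith)
    field_simp
    ring

lemma summable_kroneckerCoeff_mul_neg (hq0 : q ≠ 0) (hq : |q| < 1) :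
    Summable fun n => kroneckerCoeff q n * kroneckerCoeff q (-n) := by
  obtain ⟨z, hz1, hz2⟩ := exists_between hq
  have hz : 0 < z := (abs_nonneg q).trans_lt hz1
  rw [← abs_of_pos hz] at hz1 hz2
  have summable : Summable fun n => ‖kroneckerCoeff q n * z ^ n‖ := by
    simpa using (summable_pow_mul_kroneckerCoeff_mul_zpow hq0 hq 0 hz1 hz2).norm
  simpa using summable_convolution hz.ne' summable summable 0

lemma tsum_zpow_mul_kroneckerCoeff_mul_neg (hq0 : q ≠ 0) (hq : |q| < 1) {ε : ℝ}
    (hε : ε * ε = 1) :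
    ∑' n : ℤ, ε ^ n * (kroneckerCoeff q n * kroneckerCoeff q (-n)) =
      1 / 4 + 2 * ∑' d : ℕ,
        ((d : ℝ) + 1) * ((-1) ^ d * (ε * q ^ (d + 1) / (1 - ε * q ^ (d + 1)))) := by
  have abs_ε : |ε| = 1 := by rw [← sq_eq_sq₀ (abs_nonneg ε) one_pos.le, sq_abs, sq, hε, one_pow]
  have summable : Summable fun n : ℤ => ε ^ n * (kroneckerCoeff q n * kroneckerCoeff q (-n)) := by
    refine .of_norm_bounded (summable_kroneckerCoeff_mul_neg hq0 hq).norm fun n => ?_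
    rw [norm_mul, norm_zpow, Real.norm_eq_abs, abs_ε, one_zpow, one_mul]
  have zpow_succ (x : ℝ) (k : ℕ) : x ^ ((k : ℤ) + 1) = x ^ (k + 1) :=
    mod_cast zpow_natCast x (k + 1)
  rw [tsum_int_eq_zero_add_two_mul_tsum_succ summable fun n => by
      rw [zpow_neg, ← inv_zpow, inv_eq_of_mul_eq_one_left hε, neg_neg,
        mul_comm (kroneckerCoeff q _)],
    (hasSum_lambert_swap hq abs_ε.le).tsum_eq]
  simp only [kroneckerCoeff_mul_kroneckerCoeff_neg hq0 hq, zpow_zero, zpow_succ]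
  norm_num

lemma lambert_term_eq (hq0 : q ≠ 0) (hq : |q| < 1) (k : ℕ) :
    ((k : ℝ) + 1) * (q ^ (k + 1) / (1 + (-q) ^ (k + 1))) =
      ((k : ℝ) + 1) * ((-1) ^ k * (1 * (q ^ 2) ^ (k + 1) / (1 - 1 * (q ^ 2) ^ (k + 1)))) +
        kroneckerSqCoeff (q ^ 2) (k + 1) * q ^ ((k : ℤ) + 1) := by
  have hk : (k : ℤ) + 1 ≠ 0 := by lia
  have h1 := one_sub_zpow_ne_zero hq hk
  have h2 := one_add_zpow_ne_zero hq (k + 1)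
  have zpow_succ (x : ℝ) : x ^ ((k : ℤ) + 1) = x ^ (k + 1) := mod_cast zpow_natCast x (k + 1)
  rw [zpow_succ] at h1 h2
  rw [kroneckerSqCoeff_eq (pow_ne_zero 2 hq0) (abs_sq_lt_one hq) hk, zpow_succ, zpow_succ,
    pow_right_comm q 2, neg_pow q, pow_succ (-1 : ℝ)]
  have h3 : 1 - (q ^ (k + 1)) ^ 2 ≠ 0 := by
    rw [← one_pow 2, sq_sub_sq]
    exact mul_ne_zero h2 h1
  push_cast
  rcases neg_one_pow_eq_or ℝ k with h | h <;> rw [h] <;>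
    simp only [one_mul, neg_mul, neg_neg, ← sub_eq_add_neg] <;> field_simp <;> ring

lemma twoSquareSeries_sq (hq0 : q ≠ 0) (hq : |q| < 1) :
    twoSquareSeries q ^ 2 =
      1 + 8 * ∑' k : ℕ, ((k : ℝ) + 1) * (q ^ (k + 1) / (1 + (-q) ^ (k + 1))) := by
  have hp := abs_sq_lt_one hq
  have summable := (summable_kroneckerCoeff_sq_mul_zpow hq0 hq).norm
  have square : HasSum (fun n => kroneckerSqCoeff (q ^ 2) n * q ^ n) _ :=
    hasSum_tsum_convolution hq0 summable summable
  have positive : Summable fun k : ℕ => kroneckerSqCoeff (q ^ 2) (k + 1) * q ^ ((k : ℤ) + 1) :=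
    square.summable.comp_injective (i := fun k : ℕ => (k : ℤ) + 1) fun a b h => by simpa using h
  have bilateral := tsum_int_eq_zero_add_two_mul_tsum_succ square.summable
    (kroneckerSqCoeff_sq_mul_zpow_neg hq0 hq)
  have lambert := (hasSum_lambert_swap (ε := 1) hp (by simp)).summable
  simp only [lambert_term_eq hq0 hq]
  rw [lambert.tsum_add positive]
  have central := tsum_zpow_mul_kroneckerCoeff_mul_neg (pow_ne_zero 2 hq0) hp (one_mul (1 : ℝ))
  rw [square.tsum_eq, zpow_zero, mul_one] at bilateral
  simp only [one_zpow, one_mul] at central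
  have center : kroneckerSqCoeff (q ^ 2) 0 =
      ∑' n, kroneckerCoeff (q ^ 2) n * kroneckerCoeff (q ^ 2) (-n) := by
    simp only [kroneckerSqCoeff, zero_sub]
  simp only [twoSquareSeries, one_mul]
  linear_combination 4 * bilateral + 4 * center + 4 * central

lemma tsum_neg_one_zpow_mul_kroneckerCoeff_mul (hq0 : q ≠ 0) (hq : |q| < 1) {n : ℤ}
    (hn : n ≠ 0) :
    ∑' a : ℤ, (-1) ^ a * kroneckerCoeff q a * kroneckerCoeff q (n - a) = 0 := by
  rcases Int.even_or_odd n with even | odd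
  · refine (mul_eq_zero.1 ?_).resolve_left (one_sub_zpow_ne_zero hq hn)
    rw [← tsum_mul_left, ← tsum_neg_one_zpow_mul_kroneckerCoeff_sub_shift hq0 hq even]
    refine tsum_congr fun a => ?_
    rw [kroneckerCoeff_sub_shift hq0 hq]
    ring
  · -- For odd `n` the reflection `a ↦ n - a` changes the sign of every term.
    rw [← self_eq_neg, ← tsum_neg]
    refine ((Equiv.subLeft n).tsum_eq _).symm.trans (tsum_congr fun a => ?_)
    rw [Equiv.subLeft_apply, sub_sub_cancel, zpow_sub₀ (by norm_num), odd.neg_one_zpow]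
    rcases Int.even_or_odd a with h | h <;> rw [h.neg_one_zpow] <;> ring

lemma twoSquareSeries_mul_neg (hq0 : q ≠ 0) (hq : |q| < 1) :
    twoSquareSeries q * twoSquareSeries (-q) = twoSquareSeries (-q ^ 2) ^ 2 := by
  have hp0 := pow_ne_zero 2 hq0
  have hp := abs_sq_lt_one hq
  have summable := (summable_kroneckerCoeff_sq_mul_zpow hq0 hq).norm
  have neg_term (n : ℤ) : kroneckerCoeff (q ^ 2) n * (-q) ^ n =
      (-1) ^ n * kroneckerCoeff (q ^ 2) n * q ^ n := by
    rw [neg_eq_neg_one_mul, mul_zpow, mul_left_comm, mul_assoc]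
  have summable_alt : Summable fun n => ‖(-1) ^ n * kroneckerCoeff (q ^ 2) n * q ^ n‖ := by
    simpa only [neg_term, neg_sq] using
      (summable_kroneckerCoeff_sq_mul_zpow (neg_ne_zero.2 hq0) (by rwa [abs_neg])).norm
  have product := (hasSum_tsum_convolution hq0 summable_alt summable).unique
    (hasSum_single 0 fun n hn => by
      rw [tsum_neg_one_zpow_mul_kroneckerCoeff_mul hp0 hp hn, zero_mul])
  have central := tsum_zpow_mul_kroneckerCoeff_mul_neg hp0 hp (ε := -1) (by norm_num)
  simp only [zero_sub, zpow_zero, mul_assoc] at product central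
  rw [twoSquareSeries_sq (neg_ne_zero.2 hp0) (by rwa [abs_neg])]
  have lambert_eq (d : ℕ) : ((d : ℝ) + 1) * ((-q ^ 2) ^ (d + 1) / (1 + (- -q ^ 2) ^ (d + 1))) =
      (d + 1) * ((-1) ^ d * (-1 * (q ^ 2) ^ (d + 1) / (1 - -1 * (q ^ 2) ^ (d + 1)))) := by
    rw [neg_neg, neg_pow (q ^ 2), pow_succ (-1 : ℝ), neg_one_mul, sub_neg_eq_add]
    ring
  simp only [twoSquareSeries, neg_sq q, neg_term, lambert_eq, mul_assoc]
  linear_combination 4 * product + 4 * central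

lemma twoSquareSeries_add_neg (hq0 : q ≠ 0) (hq : |q| < 1) :
    twoSquareSeries q + twoSquareSeries (-q) = 2 * twoSquareSeries (q ^ 2) := by
  have hp0 := pow_ne_zero 2 hq0
  have summable_neg := summable_kroneckerCoeff_sq_mul_zpow (neg_ne_zero.2 hq0) (by rwa [abs_neg])
  rw [neg_sq] at summable_neg
  have sum := (summable_kroneckerCoeff_sq_mul_zpow hq0 hq).hasSum.add summable_neg.hasSum
  have injective : Function.Injective fun k : ℤ => 2 * k := mul_right_injective₀ two_ne_zero
  have odd_vanish (n : ℤ) (hn : n ∉ Set.range fun k : ℤ => 2 * k) :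
      kroneckerCoeff (q ^ 2) n * q ^ n + kroneckerCoeff (q ^ 2) n * (-q) ^ n = 0 := by
    have odd : Odd n := Int.not_even_iff_odd.1 fun h =>
      hn (h.exists_two_nsmul.imp fun k hk => by simpa using hk.symm)
    rw [odd.neg_zpow, mul_neg, add_neg_cancel]
  have even_terms :=
    (summable_kroneckerCoeff_sq_mul_zpow hp0 (abs_sq_lt_one hq)).hasSum.mul_left 2
  have := ((injective.hasSum_iff odd_vanish).2 sum).unique <| even_terms.congr_fun fun k => by
    rw [Function.comp_apply, (even_two_mul k).neg_zpow, kroneckerCoeff, kroneckerCoeff, zpow_mul,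
      zpow_mul]
    norm_cast
    ring
  simp only [twoSquareSeries, neg_sq]
  linarith

end TwoSquareSeries

section ThetaFunction

variable {q : ℝ}

lemma summable_pow_natAbs_sq (hq : |q| < 1) : Summable fun n : ℤ => q ^ (n.natAbs ^ 2) := by
  have on_nat : Summable fun n : ℕ => q ^ (n ^ 2) := by
    refine .of_norm_bounded (summable_geometric_of_lt_one (abs_nonneg q) hq) fun n => ?_
    rw [norm_pow]
    exact pow_le_pow_of_le_one (abs_nonneg q) hq.le (Nat.le_self_pow two_ne_zero n)
  apply Summable.of_nat_of_neg <;> simpa using on_nat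

lemma hasSum_pow_natAbs_sq_mul {a b : ℝ} (ha : |a| < 1) (hb : |b| < 1) :
    HasSum (fun y : ℤ × ℤ => a ^ (y.1.natAbs ^ 2) * b ^ (y.2.natAbs ^ 2))
      (sqGen a * sqGen b) := by
  have summable_a := summable_pow_natAbs_sq ha
  have summable_b := summable_pow_natAbs_sq hb
  have summable := summable_mul_of_summable_norm summable_a.norm summable_b.norm
  have product := summable_a.hasSum.mul summable_b.hasSum summable
  unfold sqGen
  exact product

lemma hasSum_comp_add_sub {M : Type*} [AddCommMonoid M] [TopologicalSpace M] {F : ℤ × ℤ → M} {s : M}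
    (hF : HasSum F s) (odd_vanish : ∀ n m, Odd (n + m) → F (n, m) = 0) :
    HasSum (fun y : ℤ × ℤ => F (y.1 + y.2, y.1 - y.2)) s := by
  have injective : Function.Injective fun y : ℤ × ℤ => (y.1 + y.2, y.1 - y.2) := by
    rintro ⟨a, b⟩ ⟨c, d⟩ h
    simp only [Prod.mk.injEq] at h ⊢
    lia
  refine (injective.hasSum_iff fun ⟨n, m⟩ not_mem => odd_vanish n m ?_).2 hF
  rw [← Int.not_even_iff_odd]
  rintro ⟨k, hk⟩
  exact not_mem ⟨(k, n - k), by simp only [Prod.mk.injEq]; lia⟩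

lemma natAbs_add_sq_add_natAbs_sub_sq (a b : ℤ) :
    (a + b).natAbs ^ 2 + (a - b).natAbs ^ 2 = 2 * (a.natAbs ^ 2 + b.natAbs ^ 2) := by
  zify
  simp only [sq_abs]
  ring

lemma neg_pow_natAbs_sq (q : ℝ) (n : ℤ) :
    (-q) ^ (n.natAbs ^ 2) = (-1) ^ n * q ^ (n.natAbs ^ 2) := by
  rcases Int.even_or_odd n with even | odd
  · rw [even.neg_one_zpow, one_mul, ((Int.natAbs_even.2 even).pow_of_ne_zero two_ne_zero).neg_pow]
  · rw [odd.neg_one_zpow, neg_one_mul, (Int.natAbs_odd.2 odd).pow.neg_pow]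

lemma sqGen_sq_add_sqGen_neg_sq (hq : |q| < 1) :
    sqGen q ^ 2 + sqGen (-q) ^ 2 = 2 * sqGen (q ^ 2) ^ 2 := by
  have hq' : |-q| < 1 := by rwa [abs_neg]
  have sum := (hasSum_pow_natAbs_sq_mul hq hq).add (hasSum_pow_natAbs_sq_mul hq' hq')
  have rotated := hasSum_comp_add_sub sum fun n m odd => by
    have opposite : (-1 : ℝ) ^ n * (-1) ^ m = -1 := by
      rw [← zpow_add₀ (by norm_num), odd.neg_one_zpow]
    simp only [neg_pow_natAbs_sq]
    linear_combination q ^ n.natAbs ^ 2 * q ^ m.natAbs ^ 2 * opposite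
  have doubled := (hasSum_pow_natAbs_sq_mul (abs_sq_lt_one hq) (abs_sq_lt_one hq)).mul_left 2
  rw [sq, sq, sq (sqGen _), rotated.unique (doubled.congr_fun fun ⟨a, b⟩ => ?_)]
  simp only [← pow_add, natAbs_add_sq_add_natAbs_sub_sq]
  rw [pow_mul, pow_mul, neg_sq, two_mul]

lemma sqGen_mul_sqGen_neg (hq : |q| < 1) : sqGen q * sqGen (-q) = sqGen (-q ^ 2) ^ 2 := by
  have hq' : |-q| < 1 := by rwa [abs_neg]
  have hq2 : |-q ^ 2| < 1 := by rw [abs_neg]; exact abs_sq_lt_one hq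
  have sum := (hasSum_pow_natAbs_sq_mul hq hq').add (hasSum_pow_natAbs_sq_mul hq' hq)
  have rotated := hasSum_comp_add_sub sum fun n m odd => by
    have opposite : (-1 : ℝ) ^ n = -(-1) ^ m := by
      rw [Int.odd_add] at odd
      rcases Int.even_or_odd m with h | h
      · rw [h.neg_one_zpow, (odd.2 h).neg_one_zpow]
      · rw [h.neg_one_zpow, neg_neg, Even.neg_one_zpow]
        exact Int.not_odd_iff_even.1 fun hn => Int.not_even_iff_odd.2 h (odd.1 hn)
    simp only [neg_pow_natAbs_sq, opposite]
    ring
  have doubled := (hasSum_pow_natAbs_sq_mul hq2 hq2).mul_left 2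
  have := rotated.unique (doubled.congr_fun fun ⟨a, b⟩ => ?_)
  · linarith
  have sign : (-1 : ℝ) ^ (a - b) = (-1) ^ (a + b) := by
    rw [sub_eq_add_neg, zpow_add₀ (by norm_num), zpow_add₀ (by norm_num), zpow_neg, ← inv_zpow,
      inv_neg_one]
  have merge : q ^ (a + b).natAbs ^ 2 * q ^ (a - b).natAbs ^ 2 =
      (q ^ 2) ^ a.natAbs ^ 2 * (q ^ 2) ^ b.natAbs ^ 2 := by
    rw [← pow_add, natAbs_add_sq_add_natAbs_sub_sq, pow_mul, pow_add]
  simp only [neg_pow_natAbs_sq, sign, zpow_add₀ (by norm_num : (-1 : ℝ) ≠ 0)]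
  linear_combination 2 * ((-1) ^ a * (-1) ^ b) * merge

end ThetaFunction

section LandenTransformation

open Filter Set Topology

/-- Functions on `(-1, 1)` satisfying the functional equations that come from the Landen
transformation `q ↦ q ^ 2`, normalised at the cusp `q = 0`. -/
structure IsLandenSolution (f : ℝ → ℝ) : Prop where
  add_neg : ∀ q ∈ Ioo (0 : ℝ) 1, f q + f (-q) = 2 * f (q ^ 2)
  mul_neg : ∀ q ∈ Ioo (0 : ℝ) 1, f q * f (-q) = f (-q ^ 2) ^ 2
  pos : ∀ q ∈ Ioo (0 : ℝ) 1, 0 < f q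
  zero : f 0 = 1
  hasDerivAt_zero : HasDerivAt f 4 0

/-- The odd part `(f q - f (-q)) / 2` of a real function. -/
noncomputable def oddPart (f : ℝ → ℝ) (q : ℝ) : ℝ := (f q - f (-q)) / 2

lemma hasDerivAt_oddPart_zero {f : ℝ → ℝ} {l : ℝ} (hf : HasDerivAt f l 0) :
    HasDerivAt (oddPart f) l 0 := by
  have reflected : HasDerivAt (fun q => f (-q)) (-l) 0 := by
    have chain := hf.comp_of_eq 0 (hasDerivAt_neg' (0 : ℝ)) neg_zero.symm
    rwa [mul_neg_one] at chain
  have half_difference := (hf.sub reflected).div_const 2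
  rw [sub_neg_eq_add, add_self_div_two] at half_difference
  exact half_difference

lemma sq_mem_Ioo {q : ℝ} (hq : q ∈ Ioo (0 : ℝ) 1) : q ^ 2 ∈ Ioo (0 : ℝ) 1 :=
  ⟨pow_pos hq.1 2, pow_lt_one₀ hq.1.le hq.2 two_ne_zero⟩

namespace IsLandenSolution

variable {f g : ℝ → ℝ} {q : ℝ}

lemma eq_add_oddPart (hf : IsLandenSolution f) (hq : q ∈ Ioo (0 : ℝ) 1) :
    f q = f (q ^ 2) + oddPart f q := by
  rw [oddPart]
  linarith [hf.add_neg q hq]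

lemma oddPart_sq (hf : IsLandenSolution f) (hq : q ∈ Ioo (0 : ℝ) 1) :
    oddPart f q ^ 2 = 4 * (oddPart f (q ^ 2) * f ((q ^ 2) ^ 2)) := by
  have sum := hf.add_neg q hq
  have sum_sq := hf.add_neg _ (sq_mem_Ioo hq)
  simp only [oddPart]
  linear_combination (f q + f (-q) + 2 * f (q ^ 2)) / 4 * sum - hf.mul_neg q hq +
    (f (q ^ 2) - f (-q ^ 2)) * sum_sq

lemma oddPart_nonneg (hf : IsLandenSolution f) (hq : q ∈ Ioo (0 : ℝ) 1) : 0 ≤ oddPart f q := by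
  have sqrt_mem : √q ∈ Ioo (0 : ℝ) 1 := ⟨Real.sqrt_pos.2 hq.1, by
    rw [Real.sqrt_lt' one_pos, one_pow]; exact hq.2⟩
  have square := hf.oddPart_sq sqrt_mem
  rw [Real.sq_sqrt hq.1.le] at square
  exact nonneg_of_mul_nonneg_left (by linarith [sq_nonneg (oddPart f √q)])
    (hf.pos _ (sq_mem_Ioo hq))

lemma eventually_le_mul (hf : IsLandenSolution f) (hg : IsLandenSolution g) {R : ℝ} (hR : 1 < R) :
    ∀ᶠ q in 𝓝[>] 0, f q ≤ R * g q ∧ oddPart f q ≤ R * oddPart g q := by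
  have value_lt_zero : f 0 < R * g 0 := by rwa [hf.zero, hg.zero, mul_one]
  have values := (hf.hasDerivAt_zero.continuousAt.eventually_lt
    (hg.hasDerivAt_zero.continuousAt.const_mul R) value_lt_zero).filter_mono
      (nhdsWithin_le_nhds (s := Ioi 0))
  have deriv := ((hasDerivAt_oddPart_zero hg.hasDerivAt_zero).const_mul R).sub
    (hasDerivAt_oddPart_zero hf.hasDerivAt_zero)
  have slopes := (hasDerivAt_iff_tendsto_slope.1 deriv).eventually_const_lt
    (show 0 < R * 4 - 4 by linarith)
  filter_upwards [values, slopes.filter_mono (nhdsWithin_mono 0 fun _ => ne_of_gt),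
    self_mem_nhdsWithin] with q value_lt slope_pos hq
  refine ⟨value_lt.le, ?_⟩
  have difference_lt := (slope_pos_iff_of_le (le_of_lt hq)).1 slope_pos
  have oddPart_zero (h : ℝ → ℝ) : oddPart h 0 = 0 := by rw [oddPart, neg_zero, sub_self, zero_div]
  rw [Pi.sub_apply, Pi.sub_apply, oddPart_zero, oddPart_zero, mul_zero, sub_self] at difference_lt
  exact (sub_pos.1 difference_lt).le

lemma le_mul_step (hf : IsLandenSolution f) (hg : IsLandenSolution g) {R : ℝ} (hR : 0 ≤ R)
    (hq : q ∈ Ioo (0 : ℝ) 1) (h2 : f (q ^ 2) ≤ R * g (q ^ 2))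
    (h2' : oddPart f (q ^ 2) ≤ R * oddPart g (q ^ 2))
    (h4 : f ((q ^ 2) ^ 2) ≤ R * g ((q ^ 2) ^ 2)) :
    f q ≤ R * g q ∧ oddPart f q ≤ R * oddPart g q := by
  have hq2 := sq_mem_Ioo hq
  have odd_le : oddPart f q ≤ R * oddPart g q := by
    refine le_of_sq_le_sq ?_ (mul_nonneg hR (hg.oddPart_nonneg hq))
    rw [mul_pow, hf.oddPart_sq hq, hg.oddPart_sq hq]
    linarith [mul_le_mul h2' h4 (hf.pos _ (sq_mem_Ioo hq2)).le
      (mul_nonneg hR (hg.oddPart_nonneg hq2))]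
  refine ⟨?_, odd_le⟩
  rw [hf.eq_add_oddPart hq, hg.eq_add_oddPart hq, mul_add]
  exact add_le_add h2 odd_le

lemma le_mul (hf : IsLandenSolution f) (hg : IsLandenSolution g) {R : ℝ} (hR : 1 < R)
    (hq : q ∈ Ioo (0 : ℝ) 1) : f q ≤ R * g q := by
  obtain ⟨δ, hδ, near_zero⟩ := mem_nhdsGT_iff_exists_Ioo_subset.1 (hf.eventually_le_mul hg hR)
  have descent (n : ℕ) : ∀ q ∈ Ioo (0 : ℝ) 1, q ^ 2 ^ n < δ →
      f q ≤ R * g q ∧ oddPart f q ≤ R * oddPart g q := by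
    induction n with
    | zero => exact fun q hq lt_δ => near_zero ⟨hq.1, by simpa using lt_δ⟩
    | succ n ih =>
      intro q hq lt_δ
      have hq2 := sq_mem_Ioo hq
      rw [pow_succ', pow_mul] at lt_δ
      have lt_δ' : ((q ^ 2) ^ 2) ^ 2 ^ n < δ := by
        rw [pow_right_comm]
        exact (pow_le_of_le_one (by positivity) (pow_le_one₀ hq2.1.le hq2.2.le)
          two_ne_zero).trans_lt lt_δ
      obtain ⟨h2, h2'⟩ := ih _ hq2 lt_δ
      exact le_mul_step hf hg (by linarith) hq h2 h2' (ih _ (sq_mem_Ioo hq2) lt_δ').1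
  have shrinking : Tendsto (fun n : ℕ => q ^ 2 ^ n) atTop (𝓝 0) :=
    (tendsto_pow_atTop_nhds_zero_of_lt_one hq.1.le hq.2).comp
      (tendsto_pow_atTop_atTop_of_one_lt one_lt_two)
  obtain ⟨n, hn⟩ := (shrinking.eventually_lt_const hδ).exists
  exact (descent n q hq hn).1

lemma le (hf : IsLandenSolution f) (hg : IsLandenSolution g) (hq : q ∈ Ioo (0 : ℝ) 1) :
    f q ≤ g q := by
  have limit : Tendsto (fun R => R * g q) (𝓝[>] 1) (𝓝 (1 * g q)) :=
    (tendsto_id.mul_const _).mono_left nhdsWithin_le_nhds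
  rw [one_mul] at limit
  exact ge_of_tendsto limit <| eventually_mem_nhdsWithin.mono fun R hR => hf.le_mul hg hR hq

lemma eqOn (hf : IsLandenSolution f) (hg : IsLandenSolution g) : EqOn f g (Ioo 0 1) :=
  fun _ hq => (hf.le hg hq).antisymm (hg.le hf hq)

end IsLandenSolution

lemma hasDerivAt_zero_of_eventually_eq_add_tsum {f : ℝ → ℝ} {a : ℕ → ℝ → ℝ} {C l : ℝ}
    (bound : ∀ᶠ q in 𝓝[≠] 0, ∀ k, |a k q| ≤ C) (limit : Tendsto (a 0) (𝓝[≠] 0) (𝓝 l))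
    (expansion : ∀ᶠ q in 𝓝[≠] 0, f q = f 0 + ∑' k, q ^ (k + 1) * a k q) :
    HasDerivAt f l 0 := by
  have id_tendsto : Tendsto (fun q : ℝ => q) (𝓝[≠] 0) (𝓝 0) := nhdsWithin_le_nhds
  have small : ∀ᶠ q : ℝ in 𝓝[≠] 0, |q| < 1 / 2 :=
    id_tendsto.abs.eventually_lt_const (by norm_num)
  have term_limit (k : ℕ) :
      Tendsto (fun q => q ^ k * a k q) (𝓝[≠] 0) (𝓝 (if k = 0 then l else 0)) := by
    rcases k with _ | k
    · simpa using limit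
    · have pow_tendsto : Tendsto (fun q : ℝ => q ^ (k + 1)) (𝓝[≠] 0) (𝓝 0) := by
        simpa using id_tendsto.pow (k + 1)
      exact bdd_le_mul_tendsto_zero' C
        (bound.mono fun q h => h (k + 1)) pow_tendsto |>.congr fun q => mul_comm _ _
  have series_limit := tendsto_tsum_of_dominated_convergence
    (summable_geometric_two.mul_left C) term_limit <| by
      filter_upwards [bound, small] with q hC hq k
      rw [norm_mul, norm_pow, mul_comm]
      gcongr
      exacts [(abs_nonneg _).trans (hC k), hC k, hq.le]
  rw [tsum_ite_eq] at series_limit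
  refine hasDerivAt_iff_tendsto_slope.2 (series_limit.congr' ?_)
  filter_upwards [expansion, self_mem_nhdsWithin] with q hq q_ne
  rw [slope_def_field, hq, add_sub_cancel_left, sub_zero, eq_div_iff q_ne, mul_comm,
    ← tsum_mul_left]
  exact tsum_congr fun k => by ring

lemma eventually_punctured_abs_lt_one : ∀ᶠ q : ℝ in 𝓝[≠] 0, q ≠ 0 ∧ |q| < 1 :=
  eventually_mem_nhdsWithin.and <| nhdsWithin_le_nhds <|
    continuous_abs.continuousAt.eventually_lt_const (by norm_num)

lemma sqGen_zero : sqGen 0 = 1 := by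
  rw [sqGen, tsum_eq_single 0 fun n hn => by simpa using hn]
  simp

lemma sqGen_pos {q : ℝ} (hq : q ∈ Ioo (0 : ℝ) 1) : 0 < sqGen q :=
  (summable_pow_natAbs_sq (by rw [abs_of_pos hq.1]; exact hq.2)).tsum_pos
    (fun n => pow_nonneg hq.1.le _) 0 (by simp)

lemma hasDerivAt_sqGen_zero : HasDerivAt sqGen 2 0 := by
  refine hasDerivAt_zero_of_eventually_eq_add_tsum (a := fun k q => 2 * q ^ (k * (k + 1)))
    (C := 2) ?_ (by simp) ?_ <;>
    filter_upwards [eventually_punctured_abs_lt_one] with q ⟨_, hq⟩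
  · intro k
    rw [abs_mul, abs_two, abs_pow]
    exact mul_le_of_le_one_right two_pos.le (pow_le_one₀ (abs_nonneg q) hq.le)
  · rw [sqGen_zero, sqGen, tsum_int_eq_zero_add_two_mul_tsum_succ (summable_pow_natAbs_sq hq)
      fun n => by rw [Int.natAbs_neg], ← tsum_mul_left]
    congr 1
    refine tsum_congr fun k => ?_
    rw [← Nat.cast_add_one, Int.natAbs_natCast, mul_left_comm, ← pow_add]
    congr 2
    ring

lemma isLandenSolution_sqGen_sq : IsLandenSolution fun q => sqGen q ^ 2 where
  add_neg q hq := sqGen_sq_add_sqGen_neg_sq (by rw [abs_of_pos hq.1]; exact hq.2)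
  mul_neg q hq := by
    rw [← mul_pow, sqGen_mul_sqGen_neg (by rw [abs_of_pos hq.1]; exact hq.2)]
  pos q hq := pow_pos (sqGen_pos hq) 2
  zero := by rw [sqGen_zero, one_pow]
  hasDerivAt_zero := by
    have square := hasDerivAt_sqGen_zero.pow 2
    norm_num [sqGen_zero] at square
    exact square

lemma twoSquareSeries_zero : twoSquareSeries 0 = 1 := by
  rw [twoSquareSeries, tsum_eq_single 0 fun n hn => by rw [zero_zpow n hn, mul_zero]]
  norm_num [kroneckerCoeff]

lemma twoSquareSeries_pos {q : ℝ} (hq : q ∈ Ioo (0 : ℝ) 1) : 0 < twoSquareSeries q := by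
  have term_pos (n : ℤ) : 0 < kroneckerCoeff (q ^ 2) n * q ^ n := by
    have := hq.1
    rw [kroneckerCoeff]
    positivity
  exact mul_pos two_pos <| (summable_kroneckerCoeff_sq_mul_zpow hq.1.ne'
    (by rw [abs_of_pos hq.1]; exact hq.2)).tsum_pos (fun n => (term_pos n).le) 0 (term_pos 0)

lemma kroneckerCoeff_sq_neg_mul_zpow_neg {q : ℝ} (hq0 : q ≠ 0) (hq : |q| < 1) (n : ℤ) :
    kroneckerCoeff (q ^ 2) (-n) * q ^ (-n) = kroneckerCoeff (q ^ 2) n * q ^ n := by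
  rw [kroneckerCoeff_neg (pow_ne_zero 2 hq0) (abs_sq_lt_one hq), zpow_neg, sq, mul_zpow]
  field_simp [zpow_ne_zero n hq0]

lemma hasDerivAt_twoSquareSeries_zero : HasDerivAt twoSquareSeries 4 0 := by
  refine hasDerivAt_zero_of_eventually_eq_add_tsum (a := fun k q => 4 / (1 + (q ^ 2) ^ (k + 1)))
    (C := 4) (.of_forall fun q k => ?_) ?_ ?_
  · have := sq_nonneg q
    rw [abs_of_nonneg (by positivity)]
    exact div_le_self (by norm_num) (le_add_of_nonneg_right (by positivity))
  · have continuous : Continuous fun q : ℝ => 4 / (1 + (q ^ 2) ^ (0 + 1)) :=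
      continuous_const.div (by fun_prop) fun q => by positivity
    have limit := (continuous.tendsto 0).mono_left (nhdsWithin_le_nhds (s := {0}ᶜ))
    rwa [show (4 : ℝ) / (1 + (0 ^ 2) ^ (0 + 1)) = 4 by norm_num] at limit
  · filter_upwards [eventually_punctured_abs_lt_one] with q ⟨hq0, hq⟩
    rw [twoSquareSeries_zero, twoSquareSeries, tsum_int_eq_zero_add_two_mul_tsum_succ
      (summable_kroneckerCoeff_sq_mul_zpow hq0 hq) (kroneckerCoeff_sq_neg_mul_zpow_neg hq0 hq),
      mul_add, ← tsum_mul_left, ← tsum_mul_left]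
    congr 1
    · norm_num [kroneckerCoeff]
    · refine tsum_congr fun k => ?_
      rw [kroneckerCoeff]
      norm_cast
      ring

lemma isLandenSolution_twoSquareSeries : IsLandenSolution twoSquareSeries where
  add_neg q hq := twoSquareSeries_add_neg hq.1.ne' (by rw [abs_of_pos hq.1]; exact hq.2)
  mul_neg q hq := twoSquareSeries_mul_neg hq.1.ne' (by rw [abs_of_pos hq.1]; exact hq.2)
  pos q hq := twoSquareSeries_pos hq
  zero := twoSquareSeries_zero
  hasDerivAt_zero := hasDerivAt_twoSquareSeries_zero

/-- Jacobi's four-square theorem. -/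
lemma sqGen_pow_four {q : ℝ} (hq0 : 0 < q) (hq1 : q < 1) :
    sqGen q ^ 4 = 1 + 8 * ∑' k : ℕ, ((k : ℝ) + 1) * (q ^ (k + 1) / (1 + (-q) ^ (k + 1))) := by
  rw [← twoSquareSeries_sq hq0.ne' (by rwa [abs_of_pos hq0]),
    ← isLandenSolution_sqGen_sq.eqOn isLandenSolution_twoSquareSeries ⟨hq0, hq1⟩, ← pow_mul]

end LandenTransformation

section ExponentialSeries

open Real Set

variable {ι : Type*} {c μ : ι → ℝ} {U : Set ℝ} {s : ℝ}

/-- The generalised Dirichlet series with coefficients `c` and exponents `μ`. -/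
noncomputable def expSeries (c μ : ι → ℝ) (s : ℝ) : ℝ := ∑' i, c i * exp (μ i * s)

lemma mul_abs_mul_exp_mul_le {a b x δ : ℝ} (ha : a + δ ≤ x) (hb : x + δ ≤ b) (t : ℝ) :
    δ * (|t| * exp (t * x)) ≤ exp (t * a) + exp (t * b) := by
  have le_exp : δ * |t| ≤ exp (δ * |t|) := by linarith [add_one_le_exp (δ * |t|)]
  have shifted : δ * (|t| * exp (t * x)) ≤ exp (δ * |t| + t * x) := by
    rw [← mul_assoc, exp_add]
    gcongr
  refine shifted.trans ?_
  rcases abs_cases t with ⟨abs_eq, ht⟩ | ⟨abs_eq, ht⟩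
  · refine le_add_of_nonneg_of_le (exp_pos _).le (exp_le_exp.2 ?_)
    rw [abs_eq]
    linarith [mul_le_mul_of_nonneg_left hb ht]
  · refine le_add_of_le_of_nonneg (exp_le_exp.2 ?_) (exp_pos _).le
    rw [abs_eq]
    linarith [mul_le_mul_of_nonpos_left ha ht.le]

lemma exists_summable_bound_mul_exp (hU : IsOpen U)
    (hsum : ∀ s ∈ U, Summable fun i => c i * exp (μ i * s)) (hs : s ∈ U) :
    ∃ δ > 0, ∃ u : ι → ℝ, Summable u ∧
      ∀ i, ∀ x ∈ Ioo (s - δ) (s + δ), ‖c i * μ i * exp (μ i * x)‖ ≤ u i := by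
  obtain ⟨ε, hε, ball_subset⟩ := Metric.nhds_basis_closedBall.mem_iff.1 (hU.mem_nhds hs)
  rw [closedBall_eq_Icc] at ball_subset
  have left_mem : s - ε ∈ U := ball_subset ⟨le_rfl, by linarith⟩
  have right_mem : s + ε ∈ U := ball_subset ⟨by linarith, le_rfl⟩
  refine ⟨ε / 2, half_pos hε, fun i => (ε / 2)⁻¹ *
    (|c i * exp (μ i * (s - ε))| + |c i * exp (μ i * (s + ε))|),
    ((hsum _ left_mem).abs.add (hsum _ right_mem).abs).mul_left _, fun i x hx => ?_⟩
  have key := mul_abs_mul_exp_mul_le (a := s - ε) (b := s + ε) (x := x) (δ := ε / 2)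
    (by linarith [hx.1]) (by linarith [hx.2]) (μ i)
  rw [le_inv_mul_iff₀ (half_pos hε), norm_mul, norm_mul, norm_eq_abs, norm_eq_abs, norm_eq_abs,
    abs_exp, abs_mul, abs_mul, abs_exp, abs_exp]
  linarith [mul_le_mul_of_nonneg_left key (abs_nonneg (c i))]

lemma summable_mul_exp_of_isOpen (hU : IsOpen U)
    (hsum : ∀ s ∈ U, Summable fun i => c i * exp (μ i * s)) (n : ℕ) :
    ∀ s ∈ U, Summable fun i => c i * μ i ^ n * exp (μ i * s) := by
  induction n with
  | zero => simpa only [pow_zero, mul_one] using hsum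
  | succ n ih =>
    intro s hs
    obtain ⟨δ, hδ, u, hu, bound⟩ := exists_summable_bound_mul_exp hU ih hs
    simp only [pow_succ, ← mul_assoc]
    exact .of_norm_bounded hu fun i => bound i s ⟨by linarith, by linarith⟩

lemma hasDerivAt_expSeries (hU : IsOpen U)
    (hsum : ∀ s ∈ U, Summable fun i => c i * exp (μ i * s)) (hs : s ∈ U) :
    HasDerivAt (expSeries c μ) (expSeries (fun i => c i * μ i) μ s) s := by
  obtain ⟨δ, hδ, u, hu, bound⟩ := exists_summable_bound_mul_exp hU hsum hs
  have s_mem : s ∈ Ioo (s - δ) (s + δ) := ⟨by linarith, by linarith⟩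
  refine hasDerivAt_tsum_of_isPreconnected (𝕜 := ℝ) hu isOpen_Ioo isPreconnected_Ioo
    (fun i x _ => ?_) bound s_mem (hsum s hs) s_mem
  refine (((hasDerivAt_id x).const_mul (μ i)).exp.const_mul (c i)).congr_deriv ?_
  simp only [id]
  ring

lemma iteratedDeriv_expSeries (hU : IsOpen U)
    (hsum : ∀ s ∈ U, Summable fun i => c i * exp (μ i * s)) (n : ℕ) :
    EqOn (iteratedDeriv n (expSeries c μ)) (expSeries (fun i => c i * μ i ^ n) μ) U := by
  induction n with
  | zero => intro s _; simp only [iteratedDeriv_zero, pow_zero, mul_one]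
  | succ n ih =>
    intro s hs
    have locally_eq := Filter.eventuallyEq_of_mem (hU.mem_nhds hs) ih
    rw [iteratedDeriv_succ, locally_eq.deriv_eq,
      (hasDerivAt_expSeries hU (summable_mul_exp_of_isOpen hU hsum n) hs).deriv]
    simp only [pow_succ, mul_assoc]

lemma contDiffOn_expSeries (hU : IsOpen U)
    (hsum : ∀ s ∈ U, Summable fun i => c i * exp (μ i * s)) (n : ℕ) :
    ContDiffOn ℝ n (expSeries c μ) U := by
  induction n generalizing c with
  | zero =>
    exact contDiffOn_zero.2 fun s hs =>
      (hasDerivAt_expSeries hU hsum hs).continuousAt.continuousWithinAt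
  | succ n ih =>
    have deriv_eq : EqOn (deriv (expSeries c μ)) (expSeries (fun i => c i * μ i) μ) U :=
      fun s hs => (hasDerivAt_expSeries hU hsum hs).deriv
    have deriv_summable : ∀ s ∈ U, Summable fun i => c i * μ i * exp (μ i * s) := by
      simpa only [pow_one] using summable_mul_exp_of_isOpen hU hsum 1
    refine (contDiffOn_succ_iff_deriv_of_isOpen hU).2
      ⟨fun s hs => (hasDerivAt_expSeries hU hsum hs).differentiableAt.differentiableWithinAt,
        fun h => absurd h (by simp), (ih deriv_summable).congr deriv_eq⟩

end ExponentialSeries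

section TaylorSeries

open PowerSeries Filter Topology
open scoped Nat ContDiff

/-- The formal Taylor series at `0` of a real function. -/
noncomputable def taylorSeries (f : ℝ → ℝ) : ℝ⟦X⟧ := .mk fun n => iteratedDeriv n f 0 / n !

variable {f g : ℝ → ℝ}

lemma coeff_taylorSeries (n : ℕ) : coeff n (taylorSeries f) = iteratedDeriv n f 0 / n ! :=
  coeff_mk _ _

lemma taylorSeries_congr (h : f =ᶠ[𝓝 0] g) : taylorSeries f = taylorSeries g := by
  ext n
  rw [coeff_taylorSeries, coeff_taylorSeries, h.iteratedDeriv_eq n]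

lemma taylorSeries_const (a : ℝ) : taylorSeries (fun _ => a) = C a := by
  ext n
  rw [coeff_taylorSeries, coeff_C, iteratedDeriv_const]
  split_ifs with hn
  · rw [hn, Nat.factorial_zero, Nat.cast_one, div_one]
  · exact zero_div _

lemma taylorSeries_exp : taylorSeries Real.exp = exp ℝ := by
  ext n
  rw [coeff_taylorSeries, coeff_exp, iteratedDeriv_eq_iterate, Real.iter_deriv_exp, Real.exp_zero,
    eq_ratCast, Rat.cast_div, Rat.cast_one, Rat.cast_natCast]

lemma taylorSeries_add (hf : ContDiffAt ℝ ∞ f 0) (hg : ContDiffAt ℝ ∞ g 0) :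
    taylorSeries (f + g) = taylorSeries f + taylorSeries g := by
  ext n
  rw [map_add, coeff_taylorSeries, coeff_taylorSeries, coeff_taylorSeries,
    iteratedDeriv_add (hf.of_le (mod_cast le_top)) (hg.of_le (mod_cast le_top)), add_div]

lemma taylorSeries_mul (hf : ContDiffAt ℝ ∞ f 0) (hg : ContDiffAt ℝ ∞ g 0) :
    taylorSeries (f * g) = taylorSeries f * taylorSeries g := by
  ext n
  rw [coeff_mul, coeff_taylorSeries, Finset.Nat.sum_antidiagonal_eq_sum_range_succ_mk,
    iteratedDeriv_mul (hf.of_le (mod_cast le_top)) (hg.of_le (mod_cast le_top)), Finset.sum_div]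
  refine Finset.sum_congr rfl fun i hi => ?_
  rw [coeff_taylorSeries, coeff_taylorSeries, Nat.cast_choose ℝ (Finset.mem_range_succ_iff.1 hi)]
  field_simp

lemma derivative_taylorSeries (f : ℝ → ℝ) : d⁄dX ℝ (taylorSeries f) = taylorSeries (deriv f) := by
  ext n
  rw [coeff_derivative, coeff_taylorSeries, coeff_taylorSeries, iteratedDeriv_succ',
    Nat.factorial_succ]
  push_cast
  field_simp

lemma derivative_derivative_taylorSeries (hf : ContDiffAt ℝ ∞ f 0) {β γ : ℝ}
    (h : ∀ᶠ s in 𝓝 0, iteratedDeriv 2 f s = β * f s + 2 * γ * f s ^ 3) :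
    d⁄dX ℝ (d⁄dX ℝ (taylorSeries f)) =
      C β * taylorSeries f + 2 * C γ * taylorSeries f ^ 3 := by
  have ode : deriv (deriv f) =ᶠ[𝓝 0] (fun _ => β) * f + (fun _ => 2 * γ) * (f * f * f) := by
    filter_upwards [h] with s hs
    rw [iteratedDeriv_succ, iteratedDeriv_one] at hs
    simp only [hs, Pi.add_apply, Pi.mul_apply]
    ring
  have smooth_sq : ContDiffAt ℝ ∞ (f * f) 0 := hf.mul hf
  have smooth_cube : ContDiffAt ℝ ∞ (f * f * f) 0 := smooth_sq.mul hf
  have smooth_const_mul (a : ℝ) {g : ℝ → ℝ} (hg : ContDiffAt ℝ ∞ g 0) :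
      ContDiffAt ℝ ∞ ((fun _ => a) * g) 0 := contDiffAt_const.mul hg
  rw [derivative_taylorSeries, derivative_taylorSeries, taylorSeries_congr ode,
    taylorSeries_add (smooth_const_mul _ hf) (smooth_const_mul _ smooth_cube),
    taylorSeries_mul contDiffAt_const hf, taylorSeries_mul contDiffAt_const smooth_cube,
    taylorSeries_mul smooth_sq hf, taylorSeries_mul hf hf, taylorSeries_const, taylorSeries_const,
    map_mul, map_ofNat]
  ring

lemma constantCoeff_iterate_derivative_taylorSeries (f : ℝ → ℝ) (n : ℕ) :
    constantCoeff ((d⁄dX ℝ)^[n] (taylorSeries f)) = iteratedDeriv n f 0 := by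
  induction n generalizing f with
  | zero =>
    rw [Function.iterate_zero_apply, ← coeff_zero_eq_constantCoeff_apply, coeff_taylorSeries,
      Nat.factorial_zero, Nat.cast_one, div_one]
  | succ n ih =>
    rw [Function.iterate_succ_apply, derivative_taylorSeries, ih, iteratedDeriv_succ']

end TaylorSeries

section TangentNumbers

open PowerSeries
open scoped Nat ContDiff

lemma tanh_half_eq (s : ℝ) : Real.tanh (s / 2) = (Real.exp s - 1) / (Real.exp s + 1) := by
  rw [Real.tanh_eq, Real.exp_neg, div_eq_div_iff (by positivity) (by positivity),
    show Real.exp s = Real.exp (s / 2) * Real.exp (s / 2) by rw [← Real.exp_add, add_halves]]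
  field_simp

lemma contDiff_tanh_half : ContDiff ℝ ∞ fun s : ℝ => Real.tanh (s / 2) := by
  simp only [tanh_half_eq]
  exact (Real.contDiff_exp.sub contDiff_const).div (Real.contDiff_exp.add contDiff_const)
    fun s => by positivity

lemma taylorSeries_tanh_half_mul_exp_add_one :
    taylorSeries (fun s => Real.tanh (s / 2)) * (exp ℝ + 1) = exp ℝ - 1 := by
  have taylorSeries_exp_add (a : ℝ) :
      taylorSeries (Real.exp + fun _ => a) = exp ℝ + C a := by
    rw [taylorSeries_add Real.contDiff_exp.contDiffAt contDiffAt_const, taylorSeries_exp,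
      taylorSeries_const]
  rw [sub_eq_add_neg, ← map_one (C (R := ℝ)), ← map_neg, ← taylorSeries_exp_add,
    ← taylorSeries_exp_add, ← taylorSeries_mul (g := Real.exp + fun _ => 1)
      contDiff_tanh_half.contDiffAt (Real.contDiff_exp.add contDiff_const).contDiffAt]
  congr 1
  funext s
  simp only [Pi.mul_apply, Pi.add_apply]
  rw [tanh_half_eq, div_mul_cancel₀ _ (by positivity), sub_eq_add_neg]

lemma X_mul_taylorSeries_tanh_half :
    X * taylorSeries (fun s => Real.tanh (s / 2)) =
      X + 2 * (rescale 2 (bernoulliPowerSeries ℝ) - bernoulliPowerSeries ℝ) := by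
  have bernoulli_spec := bernoulliPowerSeries_mul_exp_sub_one ℝ
  have rescaled_spec := congrArg (rescale (2 : ℝ)) bernoulli_spec
  have exp_sq : exp ℝ ^ 2 = rescale 2 (exp ℝ) := mod_cast exp_pow_eq_rescale_exp (A := ℝ) 2
  rw [map_mul, map_sub, ← exp_sq, map_one, rescale_X, map_ofNat] at rescaled_spec
  have sub_one_ne_zero : exp ℝ - 1 ≠ 0 := fun h => by
    rw [h, mul_zero] at bernoulli_spec
    exact X_ne_zero bernoulli_spec.symm
  have add_one_ne_zero : exp ℝ + 1 ≠ 0 := fun h => by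
    have := congrArg constantCoeff h
    norm_num at this
  refine mul_right_cancel₀ sub_one_ne_zero (mul_right_cancel₀ add_one_ne_zero ?_)
  linear_combination X * (exp ℝ - 1) * taylorSeries_tanh_half_mul_exp_add_one -
    2 * rescaled_spec + 2 * (exp ℝ + 1) * bernoulli_spec

lemma iteratedDeriv_tanh_half_zero (n : ℕ) :
    iteratedDeriv (2 * n + 1) (fun s => Real.tanh (s / 2)) 0 =
      (4 ^ (n + 1) - 1) * ((bernoulli (2 * (n + 1)) : ℚ) : ℝ) / (n + 1 : ℕ) := by
  have coeff_eq := congrArg (coeff (2 * n + 1 + 1)) X_mul_taylorSeries_tanh_half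
  rw [coeff_succ_X_mul, coeff_taylorSeries, map_add, coeff_X, if_neg (by omega), zero_add,
    ← map_ofNat (C (R := ℝ)), coeff_C_mul, map_sub, coeff_rescale, bernoulliPowerSeries, coeff_mk,
    Nat.factorial_succ (2 * n + 1), eq_ratCast, show 2 * n + 1 + 1 = 2 * (n + 1) by ring, pow_mul]
    at coeff_eq
  push_cast at coeff_eq ⊢
  field_simp at coeff_eq ⊢
  linear_combination coeff_eq

lemma abs_bernoulli_two_mul {n : ℕ} (hn : n ≠ 0) :
    |((bernoulli (2 * n) : ℚ) : ℝ)| = (-1) ^ (n + 1) * ((bernoulli (2 * n) : ℚ) : ℝ) := by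
  have zeta_nonneg := (hasSum_zeta_nat hn).nonneg fun k => by positivity
  have factor_pos : 0 < (2 : ℝ) ^ (2 * n - 1) * Real.pi ^ (2 * n) / (2 * n)! := by
    have := Real.pi_pos
    positivity
  have signed_nonneg : 0 ≤ (-1) ^ (n + 1) * ((bernoulli (2 * n) : ℚ) : ℝ) :=
    nonneg_of_mul_nonneg_left (zeta_nonneg.trans_eq (by ring)) factor_pos
  rw [← abs_of_nonneg signed_nonneg, abs_mul, abs_neg_one_pow, one_mul]

lemma iteratedDeriv_tanh_half_zero_eq_tangentNum (n : ℕ) :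
    iteratedDeriv (2 * n + 1) (fun s => Real.tanh (s / 2)) 0 = (-1) ^ n * tangentNum (n + 1) := by
  have sign_sq : ((-1 : ℝ) ^ n) ^ 2 = 1 := by rw [pow_right_comm, neg_one_sq, one_pow]
  rw [iteratedDeriv_tanh_half_zero, tangentNum, abs_bernoulli_two_mul n.succ_ne_zero, pow_add _ n 2]
  linear_combination -(4 ^ (n + 1) - 1) * ((bernoulli (2 * (n + 1)) : ℚ) : ℝ) / (n + 1 : ℕ) *
    sign_sq

end TangentNumbers

section EllipticTanh

open Set Filter Topology
open scoped ContDiff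

variable {q s : ℝ}

/-- The Lambert coefficient `q ^ n / (1 + (-q) ^ n)` at `n = k + 1`. -/
noncomputable def lambertCoeff (q : ℝ) (k : ℕ) : ℝ := q ^ (k + 1) / (1 + (-q) ^ (k + 1))

/-- The Lambert series `∑ n ≥ 1, q ^ n / (1 + (-q) ^ n) * exp (n * s)`. -/
noncomputable def lambertExpSeries (q : ℝ) : ℝ → ℝ :=
  expSeries (lambertCoeff q) fun k => (k : ℝ) + 1

/-- The Jordan–Kronecker function with parameter `-q`, evaluated at `z = -exp s`. -/
noncomputable def kroneckerExpSeries (q : ℝ) : ℝ → ℝ :=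
  expSeries (fun n : ℤ => kroneckerCoeff (-q) n * (-1) ^ n) fun n => n

/-- The elliptic deformation `tanh (s / 2) + 4 * ∑ n ≥ 1, q ^ n / (1 + (-q) ^ n) * sinh (n * s)` of
the hyperbolic tangent, which is a Jacobi elliptic function up to scaling. -/
noncomputable def ellipticTanh (q s : ℝ) : ℝ :=
  Real.tanh (s / 2) + 2 * (lambertExpSeries q s - lambertExpSeries q (-s))

lemma ellipticTanh_neg (q s : ℝ) : ellipticTanh q (-s) = -ellipticTanh q s := by
  rw [ellipticTanh, ellipticTanh, neg_div, Real.tanh_neg, neg_neg]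
  ring

lemma lambertCoeff_eq (q : ℝ) (k : ℕ) :
    lambertCoeff q k = q ^ (k + 1) * kroneckerCoeff (-q) (k + 1 : ℕ) := by
  rw [lambertCoeff, kroneckerCoeff, zpow_natCast, mul_one_div]

lemma abs_neg_lt_one (hq0 : 0 < q) (hq1 : q < 1) : |-q| < 1 := by
  rwa [abs_neg, abs_of_pos hq0]

lemma summable_lambertCoeff_mul_exp (hq0 : 0 < q) (hq1 : q < 1) :
    ∀ s ∈ Iio (-Real.log q), Summable fun k : ℕ => lambertCoeff q k * Real.exp ((k + 1) * s) := by
  intro s hs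
  have ratio_lt_one : q * Real.exp s < 1 := by
    rw [← Real.exp_log hq0, ← Real.exp_add, Real.exp_lt_one_iff]
    linarith [mem_Iio.1 hs]
  have geometric := (summable_nat_add_iff 1).2 <|
    summable_geometric_of_lt_one (by positivity) ratio_lt_one
  refine .of_norm_bounded (geometric.mul_left (1 / (1 - |-q|))) fun k => ?_
  have exp_eq : Real.exp ((k + 1) * s) = Real.exp s ^ (k + 1) := mod_cast Real.exp_nat_mul s (k + 1)
  rw [lambertCoeff_eq, exp_eq, mul_right_comm, ← mul_pow, mul_comm, norm_mul, norm_pow,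
    Real.norm_of_nonneg (by positivity : 0 ≤ q * Real.exp s)]
  exact mul_le_mul_of_nonneg_right
    (abs_kroneckerCoeff_natCast_le (abs_neg_lt_one hq0 hq1) (k + 1)) (by positivity)

lemma kroneckerCoeff_mul_neg_exp_zpow (p s : ℝ) (n : ℤ) :
    kroneckerCoeff p n * (-1) ^ n * Real.exp (n * s) = kroneckerCoeff p n * (-Real.exp s) ^ n := by
  rw [mul_comm (n : ℝ), Real.exp_mul, Real.rpow_intCast, mul_assoc, ← mul_zpow, neg_one_mul]

lemma abs_neg_exp_mem_Ioo (hq0 : 0 < q) (hs : s ∈ Ioo (Real.log q) 0) :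
    |-Real.exp s| ∈ Ioo |-q| 1 := by
  rw [abs_neg, abs_neg, Real.abs_exp, abs_of_pos hq0]
  exact ⟨(Real.log_lt_iff_lt_exp hq0).1 hs.1, Real.exp_lt_one_iff.2 hs.2⟩

lemma summable_kroneckerCoeff_mul_exp (hq0 : 0 < q) (hq1 : q < 1) :
    ∀ s ∈ Ioo (Real.log q) 0,
      Summable fun n : ℤ => kroneckerCoeff (-q) n * (-1) ^ n * Real.exp (n * s) := by
  intro s hs
  obtain ⟨lower, upper⟩ := abs_neg_exp_mem_Ioo hq0 hs
  simpa only [kroneckerCoeff_mul_neg_exp_zpow, pow_zero, one_mul] using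
    summable_pow_mul_kroneckerCoeff_mul_zpow (neg_ne_zero.2 hq0.ne') (abs_neg_lt_one hq0 hq1) 0
      lower upper

lemma exists_iteratedDeriv_two_kroneckerExpSeries (hq0 : 0 < q) (hq1 : q < 1) :
    ∃ b : ℝ, ∀ s ∈ Ioo (Real.log q) 0, kroneckerExpSeries q s ^ 3 =
      1 / 2 * iteratedDeriv 2 (kroneckerExpSeries q) s + b * kroneckerExpSeries q s := by
  obtain ⟨b, cube_eq⟩ := exists_tsum_kroneckerCoeff_mul_zpow_pow_three
    (neg_ne_zero.2 hq0.ne') (abs_neg_lt_one hq0 hq1)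
  refine ⟨b, fun s hs => ?_⟩
  obtain ⟨lower, upper⟩ := abs_neg_exp_mem_Ioo hq0 hs
  rw [kroneckerExpSeries,
    iteratedDeriv_expSeries isOpen_Ioo (summable_kroneckerCoeff_mul_exp hq0 hq1) 2 hs]
  have second_term (n : ℤ) : kroneckerCoeff (-q) n * (-1) ^ n * (n : ℝ) ^ 2 * Real.exp (n * s) =
      n ^ 2 * kroneckerCoeff (-q) n * (-Real.exp s) ^ n := by
    rw [mul_right_comm, kroneckerCoeff_mul_neg_exp_zpow]
    ring
  simp only [expSeries, second_term, kroneckerCoeff_mul_neg_exp_zpow, cube_eq _ lower upper]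

lemma kroneckerCoeff_neg_add_one (hq0 : 0 < q) (hq1 : q < 1) (k : ℕ) :
    kroneckerCoeff (-q) (-(k + 1)) = (-1) ^ (k + 1) * lambertCoeff q k := by
  have zpow_succ : (-q) ^ ((k : ℤ) + 1) = (-1) ^ (k + 1) * q ^ (k + 1) := by
    rw [← mul_pow, neg_one_mul]
    exact mod_cast zpow_natCast (-q) (k + 1)
  rw [kroneckerCoeff_neg (neg_ne_zero.2 hq0.ne') (abs_neg_lt_one hq0 hq1), lambertCoeff_eq,
    zpow_succ, mul_assoc, Nat.cast_succ]

lemma kroneckerCoeff_add_one (hq0 : 0 < q) (hq1 : q < 1) (k : ℕ) :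
    kroneckerCoeff (-q) (k + 1) = 1 - (-1) ^ (k + 1) * lambertCoeff q k := by
  rw [← kroneckerCoeff_neg_add_one hq0 hq1,
    kroneckerCoeff_neg_eq_one_sub (neg_ne_zero.2 hq0.ne') (abs_neg_lt_one hq0 hq1), sub_sub_cancel]

lemma ellipticTanh_eq_neg_two_mul (hq0 : 0 < q) (hq1 : q < 1) (hs : s ∈ Ioo (Real.log q) 0) :
    ellipticTanh q s = -2 * kroneckerExpSeries q s := by
  have zpow_succ (k : ℕ) : (-1 : ℝ) ^ ((k : ℤ) + 1) = (-1) ^ (k + 1) :=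
    mod_cast zpow_natCast (-1 : ℝ) (k + 1)
  let f (n : ℤ) : ℝ := kroneckerCoeff (-q) n * (-1) ^ n * Real.exp (n * s)
  have lambert {x : ℝ} (hx : x < -Real.log q) : HasSum
      (fun k : ℕ => lambertCoeff q k * Real.exp ((k + 1) * x)) (lambertExpSeries q x) :=
    (summable_lambertCoeff_mul_exp hq0 hq1 x hx).hasSum
  have term_neg (k : ℕ) : f (-(k + 1)) = lambertCoeff q k * Real.exp ((k + 1) * -s) := by
    have sign : (-1 : ℝ) ^ (k + 1) * (-1) ^ (-((k : ℤ) + 1)) = 1 := by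
      rw [← zpow_succ, zpow_neg, mul_inv_cancel₀ (zpow_ne_zero _ (by norm_num))]
    simp only [f, kroneckerCoeff_neg_add_one hq0 hq1, mul_right_comm _ (lambertCoeff q k), sign]
    push_cast
    ring_nf
  have term_zero : f 0 = 1 / 2 := by norm_num [f, kroneckerCoeff]
  have term_pos (k : ℕ) : f (k + 1) =
      -Real.exp s * (-Real.exp s) ^ k - lambertCoeff q k * Real.exp ((k + 1) * s) := by
    have exp_eq : Real.exp ((k + 1) * s) = Real.exp s ^ (k + 1) :=
      mod_cast Real.exp_nat_mul s (k + 1)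
    have sign : (-1 : ℝ) ^ (k + 1) * (-1) ^ (k + 1) = 1 := by rw [← mul_pow]; norm_num
    rw [← pow_succ', neg_pow]
    simp only [f, kroneckerCoeff_add_one hq0 hq1, zpow_succ, Int.cast_add,
      Int.cast_natCast, Int.cast_one, exp_eq]
    linear_combination (-lambertCoeff q k * Real.exp s ^ (k + 1)) * sign
  have geometric := (hasSum_geometric_of_abs_lt_one (abs_neg_exp_mem_Ioo hq0 hs).2).mul_left
    (-Real.exp s)
  have total : kroneckerExpSeries q s = _ := (HasSum.of_add_one_of_neg_add_one
    ((geometric.sub (lambert (hs.2.trans (neg_pos.2 (Real.log_neg hq0 hq1))))).congr_fun term_pos)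
    ((lambert (neg_lt_neg hs.1)).congr_fun term_neg)).tsum_eq
  have one_add_exp_ne_zero : 1 + Real.exp s ≠ 0 := by positivity
  rw [total, term_zero, ellipticTanh, tanh_half_eq, sub_neg_eq_add]
  field_simp
  ring

lemma iteratedDeriv_ellipticTanh_neg (q s : ℝ) (n : ℕ) :
    iteratedDeriv n (ellipticTanh q) (-s) =
      (-1) ^ (n + 1) * iteratedDeriv n (ellipticTanh q) s := by
  have odd : (fun s => ellipticTanh q (-s)) = fun s => -ellipticTanh q s :=
    funext (ellipticTanh_neg q)
  have reflected := iteratedDeriv_comp_neg n (ellipticTanh q) (-s)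
  rw [odd, iteratedDeriv_fun_neg, neg_neg, smul_eq_mul] at reflected
  rw [pow_succ, mul_neg_one, neg_mul, ← reflected, neg_neg]

lemma exists_iteratedDeriv_two_ellipticTanh (hq0 : 0 < q) (hq1 : q < 1) :
    ∃ β : ℝ, ∀ s ∈ Ioo (Real.log q) (-Real.log q), iteratedDeriv 2 (ellipticTanh q) s =
      β * ellipticTanh q s + 2 * (1 / 4) * ellipticTanh q s ^ 3 := by
  obtain ⟨b, cube_eq⟩ := exists_iteratedDeriv_two_kroneckerExpSeries hq0 hq1
  have negative {s : ℝ} (hs : s ∈ Ioo (Real.log q) 0) : iteratedDeriv 2 (ellipticTanh q) s =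
      -2 * b * ellipticTanh q s + 2 * (1 / 4) * ellipticTanh q s ^ 3 := by
    have locally_eq : ellipticTanh q =ᶠ[𝓝 s] fun s => -2 * kroneckerExpSeries q s :=
      eventuallyEq_of_mem (isOpen_Ioo.mem_nhds hs) fun _ => ellipticTanh_eq_neg_two_mul hq0 hq1
    rw [locally_eq.iteratedDeriv_eq, iteratedDeriv_const_mul_field,
      ellipticTanh_eq_neg_two_mul hq0 hq1 hs]
    linear_combination 4 * cube_eq s hs
  refine ⟨-2 * b, fun s hs => ?_⟩
  have reflect := iteratedDeriv_ellipticTanh_neg q s 2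
  rcases lt_trichotomy s 0 with neg | rfl | pos
  · exact negative ⟨hs.1, neg⟩
  · have value := ellipticTanh_neg q 0
    rw [neg_zero] at value reflect
    rw [self_eq_neg.1 value]
    linear_combination 1 / 2 * reflect
  · have ode := negative ⟨neg_lt_neg_iff.1 (by rw [neg_neg]; exact hs.2), neg_lt_zero.2 pos⟩
    rw [reflect, ellipticTanh_neg] at ode
    linear_combination -ode

lemma contDiffAt_lambertExpSeries (hq0 : 0 < q) (hq1 : q < 1) (n : ℕ) :
    ContDiffAt ℝ n (lambertExpSeries q) 0 :=
  (contDiffOn_expSeries isOpen_Iio (summable_lambertCoeff_mul_exp hq0 hq1) n).contDiffAt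
    (Iio_mem_nhds (neg_pos.2 (Real.log_neg hq0 hq1)))

lemma contDiffAt_lambertExpSeries_neg (hq0 : 0 < q) (hq1 : q < 1) (n : ℕ) :
    ContDiffAt ℝ n (fun s => lambertExpSeries q (-s)) 0 :=
  ContDiffAt.comp 0 (by rw [neg_zero]; exact contDiffAt_lambertExpSeries hq0 hq1 n)
    contDiff_neg.contDiffAt

lemma contDiffAt_ellipticTanh (hq0 : 0 < q) (hq1 : q < 1) :
    ContDiffAt ℝ ∞ (ellipticTanh q) 0 :=
  contDiffAt_infty.2 fun n => (contDiffAt_infty.1 contDiff_tanh_half.contDiffAt n).add <|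
    contDiffAt_const.mul <|
      (contDiffAt_lambertExpSeries hq0 hq1 n).sub (contDiffAt_lambertExpSeries_neg hq0 hq1 n)

lemma iteratedDeriv_ellipticTanh_zero (hq0 : 0 < q) (hq1 : q < 1) (n : ℕ) :
    iteratedDeriv (2 * n + 1) (ellipticTanh q) 0 = (-1) ^ n * tangentNum (n + 1) +
      4 * ∑' k : ℕ, q ^ (k + 1) * ((k : ℝ) + 1) ^ (2 * n + 1) / (1 + (-q) ^ (k + 1)) := by
  have smooth := contDiffAt_lambertExpSeries hq0 hq1 (2 * n + 1)
  have smooth_neg := contDiffAt_lambertExpSeries_neg hq0 hq1 (2 * n + 1)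
  have lambert_eq : iteratedDeriv (2 * n + 1) (lambertExpSeries q) 0 =
      ∑' k : ℕ, q ^ (k + 1) * ((k : ℝ) + 1) ^ (2 * n + 1) / (1 + (-q) ^ (k + 1)) := by
    rw [lambertExpSeries, iteratedDeriv_expSeries isOpen_Iio
      (summable_lambertCoeff_mul_exp hq0 hq1) _ (neg_pos.2 (Real.log_neg hq0 hq1))]
    simp only [expSeries, lambertCoeff, mul_zero, Real.exp_zero, mul_one, div_mul_eq_mul_div]
  let difference : ℝ → ℝ := lambertExpSeries q - fun s => lambertExpSeries q (-s)
  have smooth_difference : ContDiffAt ℝ (2 * n + 1 : ℕ) (fun s => 2 * difference s) 0 :=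
    contDiffAt_const.mul (smooth.sub smooth_neg)
  have smooth_tanh : ContDiffAt ℝ (2 * n + 1 : ℕ) (fun s => Real.tanh (s / 2)) 0 :=
    contDiffAt_infty.1 contDiff_tanh_half.contDiffAt _
  have split : ellipticTanh q = (fun s => Real.tanh (s / 2)) + fun s => 2 * difference s := rfl
  rw [split, iteratedDeriv_add smooth_tanh smooth_difference, iteratedDeriv_const_mul_field,
    iteratedDeriv_sub smooth smooth_neg, iteratedDeriv_comp_neg, neg_zero, lambert_eq,
    iteratedDeriv_tanh_half_zero_eq_tangentNum, smul_eq_mul,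
    Odd.neg_one_pow (odd_two_mul_add_one n)]
  ring

lemma iteratedDeriv_one_ellipticTanh_zero (hq0 : 0 < q) (hq1 : q < 1) :
    iteratedDeriv 1 (ellipticTanh q) 0 = sqGen q ^ 4 / 2 := by
  have tangentNum_one : tangentNum 1 = 1 / 2 := by
    rw [tangentNum, mul_one, bernoulli_two]
    norm_num
  have expansion := iteratedDeriv_ellipticTanh_zero hq0 hq1 0
  simp only [mul_zero, zero_add, pow_zero, pow_one, one_mul, tangentNum_one] at expansion
  rw [expansion, sqGen_pow_four hq0 hq1]
  simp only [mul_div_assoc', mul_comm]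
  ring

theorem exists_tangentNum_add_eq_quarticMotzkinSum (hq0 : 0 < q) (hq1 : q < 1) :
    ∃ β : ℝ, ∀ n : ℕ, tangentNum (n + 1) + 4 * (-1) ^ n *
        ∑' k : ℕ, q ^ (k + 1) * ((k : ℝ) + 1) ^ (2 * n + 1) / (1 + (-q) ^ (k + 1)) =
      (-1) ^ n * (2 * (sqGen q ^ 4 / 4) *
        quarticMotzkinSum ((2 * (sqGen q ^ 4 / 4)) ^ 2) β (1 / 4) n 0) := by
  obtain ⟨β, ode⟩ := exists_iteratedDeriv_two_ellipticTanh hq0 hq1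
  have log_neg := Real.log_neg hq0 hq1
  have nhds_zero : ∀ᶠ s in 𝓝 (0 : ℝ), s ∈ Ioo (Real.log q) (-Real.log q) :=
    Ioo_mem_nhds log_neg (neg_pos.2 log_neg)
  have formal_ode := derivative_derivative_taylorSeries (contDiffAt_ellipticTanh hq0 hq1)
    (nhds_zero.mono ode)
  have constant_term : PowerSeries.constantCoeff (taylorSeries (ellipticTanh q)) = 0 := by
    have odd := ellipticTanh_neg q 0
    rw [neg_zero] at odd
    rw [← self_eq_neg.1 odd]
    exact constantCoeff_iterate_derivative_taylorSeries (ellipticTanh q) 0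
  have linear_coeff : PowerSeries.coeff 1 (taylorSeries (ellipticTanh q)) =
      2 * (sqGen q ^ 4 / 4) := by
    rw [coeff_taylorSeries, Nat.factorial_one, Nat.cast_one, div_one,
      iteratedDeriv_one_ellipticTanh_zero hq0 hq1]
    ring
  refine ⟨β, fun n => ?_⟩
  have sign_sq : ((-1 : ℝ) ^ n) ^ 2 = 1 := by rw [pow_right_comm, neg_one_sq, one_pow]
  rw [← linear_coeff, ← constantCoeff_iterate_derivative_of_derivative_derivative_eq constant_term
    formal_ode, constantCoeff_iterate_derivative_taylorSeries,
    iteratedDeriv_ellipticTanh_zero hq0 hq1]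
  linear_combination -tangentNum (n + 1) * sign_sq

end EllipticTanh

/-- Milne's `4m²` squares formula in Hankel determinant form:
`□(q)^{4m²} = (2^{m(2m−1)} / Π_{i=1}^{2m−1} i!) ·
  det( t_{i+j−1} + 4(−1)^{i+j} Σ_{k≥1} q^k k^{2i+2j−3}/(1+(−q)^k) )_{1≤i,j≤m}`. -/
theorem milne_hankel_4m2 (q : ℝ) (hq0 : 0 < q) (hq1 : q < 1) (m : ℕ) (hm : 1 ≤ m) :
    sqGen q ^ (4 * m ^ 2) =
      ((2 : ℝ) ^ (m * (2 * m - 1)) / ∏ i ∈ Finset.Icc 1 (2 * m - 1), (Nat.factorial i : ℝ)) *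
        Matrix.det (Matrix.of fun i j : Fin m =>
          tangentNum ((i : ℕ) + (j : ℕ) + 1) +
            4 * (-1 : ℝ) ^ ((i : ℕ) + (j : ℕ)) *
              ∑' k : ℕ, q ^ (k + 1) * ((k : ℝ) + 1) ^ (2 * (i : ℕ) + 2 * (j : ℕ) + 1) /
                (1 + (-q) ^ (k + 1))) := by
  obtain ⟨β, entry_eq⟩ := exists_tangentNum_add_eq_quarticMotzkinSum hq0 hq1
  simp only [← mul_add 2, entry_eq, det_hankel_neg_one_pow_mul_quarticMotzkinSum]
  have factorials_ne_zero : ∏ i ∈ Finset.Icc 1 (2 * m - 1), (Nat.factorial i : ℝ) ≠ 0 :=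
    Finset.prod_ne_zero_iff.2 fun i _ => mod_cast i.factorial_ne_zero
  have powers_of_two : (2 : ℝ) ^ (m * (2 * m - 1)) * 2 ^ m = 4 ^ m ^ 2 := by
    have exponent : m * (2 * m - 1) + m = 2 * m ^ 2 := by
      rw [← Nat.mul_succ, Nat.succ_eq_add_one, Nat.sub_add_cancel (by omega)]
      ring
    rw [← pow_add, exponent, pow_mul]
    norm_num
  rw [pow_mul, div_pow, ← powers_of_two]
  field_simp
end
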